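/- Let T be an r-row rectangular fluctuating tableau of type (c_1,…,c_n) with t := Σ_j |c_j| ≥ 1, let σ be the long cycle of {1,…,t} (σ(j) = j+1 for j < t, σ(t) = 1), and let w_0 be the order-reversing permutation w_0(j) = t+1−j. Then for all 0 ≤ i ≤ r: (i) prom_i(T) is everywhere defined and is a permutation of {1,…,t}; (ii) prom_i(T) = prom_{r−i}(T)^{−1}; (iii) prom_i(P(T)) = σ^{−|c_1|} ∘ prom_i(T) ∘ σ^{|c_1|}; (iv) prom_i(E(T)) = w_0 ∘ prom_{r−i}(T) ∘ w_0. -/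

import Mathlib

open scoped Classical

noncomputable section

namespace FT

/-- A (raw) `r`-row integer vector; generalized partitions are the antitone ones. -/
abbrev GP (r : ℕ) := Fin r → ℤ

/-- The weakly decreasing rearrangement of a tuple. -/
def sortDesc {r : ℕ} (α : GP r) : GP r := fun i => (α ∘ Tuple.sort α) i.rev

/-- Standard basis vector (0-indexed). -/
def eV {r : ℕ} (a : Fin r) : GP r := fun i => if i = a then 1 else 0

/-- Standard basis vector with 1-indexed row `a` (zero if out of range). -/
def eN (r : ℕ) (a : ℕ) : GP r := fun i => if (i : ℕ) + 1 = a then 1 else 0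

/-- Indicator vector of a set of rows. -/
def indV {r : ℕ} (S : Finset (Fin r)) : GP r := fun i => if i ∈ S then 1 else 0

/-- `colStep r c μ λ`: `λ` is obtained from `μ` by adding (if `c ≥ 0`) or removing
(if `c ≤ 0`) a skew column of `|c|` boxes. -/
def colStep (r : ℕ) (c : ℤ) (μ lam : GP r) : Prop :=
  ∃ S : Finset (Fin r), S.card = c.natAbs ∧
    (if 0 ≤ c then lam = μ + indV S else lam = μ - indV S)

/-- Skew fluctuating tableau of length `n` and type `c` (recorded at indices `0,…,n`;
values of `T` and `c` beyond those indices are irrelevant). -/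
def IsSkewFT (r n : ℕ) (T : ℕ → GP r) (c : ℕ → ℤ) : Prop :=
  (∀ k ≤ n, Antitone (T k)) ∧ ∀ j < n, colStep r (c j) (T j) (T (j + 1))

/-- (Non-skew) fluctuating tableau: starts at the empty shape. -/
def IsFT (r n : ℕ) (T : ℕ → GP r) (c : ℕ → ℤ) : Prop :=
  IsSkewFT r n T c ∧ T 0 = 0

/-- Rectangular: the final shape is constant. -/
def Rect (r n : ℕ) (T : ℕ → GP r) : Prop := ∃ m : ℤ, ∀ i, T n i = m

/-- Bender–Knuth involution `BK_i` (for `1 ≤ i ≤ n-1`). -/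
def BK {r : ℕ} (i : ℕ) (T : ℕ → GP r) : ℕ → GP r :=
  fun k => if k = i then sortDesc (T (i + 1) + T (i - 1) - T i) else T k

/-- `BKseg a m = BK (a+m-1) ∘ ⋯ ∘ BK a` (apply `BK a` first). -/
def BKseg {r : ℕ} (a : ℕ) : ℕ → (ℕ → GP r) → ℕ → GP r
  | 0 => id
  | m + 1 => BK (a + m) ∘ BKseg a m

/-- Promotion `P = BK_{n-1} ∘ ⋯ ∘ BK_1` on length-`n` tableaux. -/
def promo {r : ℕ} (n : ℕ) (T : ℕ → GP r) : ℕ → GP r := BKseg 1 (n - 1) T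

/-- `BKsegRev a m = BK a ∘ ⋯ ∘ BK (a+m-1)` (apply `BK (a+m-1)` first). -/
def BKsegRev {r : ℕ} (a : ℕ) : ℕ → (ℕ → GP r) → ℕ → GP r
  | 0 => id
  | m + 1 => BKsegRev a m ∘ BK (a + m)

/-- Inverse of promotion: `P⁻¹ = BK_1 ∘ ⋯ ∘ BK_{n-1}`. -/
def promoInv {r : ℕ} (n : ℕ) (T : ℕ → GP r) : ℕ → GP r := BKsegRev 1 (n - 1) T

def evacAux {r : ℕ} : ℕ → (ℕ → GP r) → ℕ → GP r
  | 0, T => T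
  | m + 1, T => evacAux m (BKseg 1 (m + 1) T)

/-- Evacuation `E = BK_1 ∘ (BK_2∘BK_1) ∘ ⋯ ∘ (BK_{n-1}∘⋯∘BK_1)`. -/
def evac {r : ℕ} (n : ℕ) (T : ℕ → GP r) : ℕ → GP r := evacAux (n - 1) T

def devacAux {r : ℕ} (n : ℕ) : ℕ → (ℕ → GP r) → ℕ → GP r
  | 0, T => T
  | m + 1, T => BKseg (n - (m + 1)) (m + 1) (devacAux n m T)

/-- Dual evacuation `E* = (BK_{n-1}∘⋯∘BK_1) ∘ (BK_{n-1}∘⋯∘BK_2) ∘ ⋯ ∘ BK_{n-1}`. -/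
def devac {r : ℕ} (n : ℕ) (T : ℕ → GP r) : ℕ → GP r := devacAux n (n - 1) T

/-- `rev(-v)`. -/
def revNeg {r : ℕ} (v : GP r) : GP r := fun i => - v i.rev

/-- Time reversal `τ`. -/
def tauT {r : ℕ} (n : ℕ) (T : ℕ → GP r) : ℕ → GP r := fun k => T (n - k)

/-- `ϖ`. -/
def varpiT {r : ℕ} (T : ℕ → GP r) : ℕ → GP r := fun k => revNeg (T k)

/-- `ε`. -/
def epsT {r : ℕ} (n : ℕ) (T : ℕ → GP r) : ℕ → GP r := fun k => revNeg (T (n - k))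

/-- Sign of the `j`-th step of `T` (paper indexing: step `j` goes from `λ^{j-1}` to `λ^j`). -/
def sgnStep {r : ℕ} (T : ℕ → GP r) (j : ℕ) : ℤ :=
  if T j = T (j - 1) then 0 else if T (j - 1) ≤ T j then 1 else -1

/-- The switch involution `toggle_j` (paper indexing, `1 ≤ j ≤ n`). -/
def toggleT {r : ℕ} (j : ℕ) (T : ℕ → GP r) : ℕ → GP r :=
  fun m => if m < j then T m else fun i => T m i - sgnStep T j

/-- Number of boxes added/removed in the step from `T j` to `T (j+1)`. -/
def stepSize {r : ℕ} (T : ℕ → GP r) (j : ℕ) : ℕ :=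
  (Finset.univ.filter fun i : Fin r => T (j + 1) i ≠ T j i).card

/-- Cumulative step sizes: position of `T j` inside the oscillization. -/
def cum {r : ℕ} (T : ℕ → GP r) (j : ℕ) : ℕ := ∑ j' ∈ Finset.range j, stepSize T j'

/-- The `j`-th intermediate shape of the oscillization of the skew-column step `μ → λ`:
boxes are added smallest-row-first and removed largest-row-first. -/
def oscStep {r : ℕ} (μ lam : GP r) (j : ℕ) : GP r := fun i =>
  let S := Finset.univ.filter fun i' : Fin r => lam i' ≠ μ i'
  if i ∈ S ∧ (if μ i < lam i then (S.filter fun i' => i' ≤ i).card ≤ j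
              else (S.filter fun i' => i ≤ i').card ≤ j)
  then lam i else μ i

/-- Largest index `j ≤ n` with `cum T j ≤ k`. -/
def stdIdx {r : ℕ} (n : ℕ) (T : ℕ → GP r) (k : ℕ) : ℕ :=
  ((Finset.range (n + 1)).filter fun j => cum T j ≤ k).sup id

/-- The oscillization `std(T)` of a length-`n` tableau, a tableau of length `t = Σ|c_j|`. -/
def stdT {r : ℕ} (n : ℕ) (T : ℕ → GP r) : ℕ → GP r := fun k =>
  if stdIdx n T k = n then T n
  else oscStep (T (stdIdx n T k)) (T (stdIdx n T k + 1)) (k - cum T (stdIdx n T k))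

/-- Rows of the promotion–evacuation growth diagram: `PE t S u` is `P^u(S)`
for a length-`t` (oscillating) tableau `S`. -/
def PE {r : ℕ} (t : ℕ) (S : ℕ → GP r) (u : ℕ) : ℕ → GP r := (promo t)^[u] S

/-- `i ∈ {1,…,r-1}` is recorded at cell `(u,v)` of the growth diagram of `S`
(rows 1-indexed; `λ^{u,v} = P^u(S)(v-u)`). -/
def recorded (r t : ℕ) (S : ℕ → GP r) (i u v : ℕ) : Prop :=
  ∃ a b : Fin r,
    (PE t S (u - 1) (v - u) = PE t S u (v - u - 1) + eV a ∧
     PE t S (u - 1) (v - u + 1) = PE t S u (v - u) + eV b ∧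
     (a : ℕ) < i ∧ i ≤ (b : ℕ))
    ∨
    (PE t S u (v - u - 1) = PE t S (u - 1) (v - u) + eV a ∧
     PE t S u (v - u) = PE t S (u - 1) (v - u + 1) + eV b ∧
     (b : ℕ) < i ∧ i ≤ (a : ℕ))

/-- `i ∈ PM(T)_{u,v}` for an off-diagonal entry of the promotion matrix of `T`
(`u, v ∈ {1,…,t}`, `1 ≤ i ≤ r-1`), using the oscillization `std(T)`. -/
def PMmem (r n t : ℕ) (T : ℕ → GP r) (i u v : ℕ) : Prop :=
  1 ≤ u ∧ u ≤ t ∧ 1 ≤ v ∧ v ≤ t ∧ u ≠ v ∧ 1 ≤ i ∧ i ≤ r - 1 ∧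
    recorded r t (stdT n T) i u (if u < v then v else v + t)

/-- Graph of the partial promotion function `prom_i(T)`: `prom_i(T)(u) = v`.
By convention `prom_0 = prom_r = id` on `{1,…,t}`. -/
def promRel (r n t : ℕ) (T : ℕ → GP r) (i u v : ℕ) : Prop :=
  if i = 0 ∨ i = r then 1 ≤ u ∧ u ≤ t ∧ u = v else PMmem r n t T i u v

/-- Sum of the first `i` entries (1-indexed prefix sums). -/
def pSum {r : ℕ} (v : GP r) (i : ℕ) : ℤ :=
  ∑ j ∈ Finset.univ.filter (fun j : Fin r => (j : ℕ) < i), v j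

/-- The filled oscillized local-rule grid: row index `k` counts down from the top row
(`k = 0` is `std(λ → ν)`), column index `q` goes right; the left column is
`std(κ → λ)` read so that `grid cA κ λ ν k 0 = std(κ→λ)` at position `cA - k`. -/
def grid {r : ℕ} (cA : ℕ) (κ lam ν : GP r) : ℕ → ℕ → GP r
  | 0, q => oscStep lam ν q
  | k + 1, 0 => oscStep κ lam (cA - (k + 1))
  | k + 1, q + 1 =>
      sortDesc (grid cA κ lam ν k (q + 1) + grid cA κ lam ν (k + 1) q -
        grid cA κ lam ν k q)
  termination_by k q => (k, q)

/-- 1-indexed entry of a vector (0 if out of range). -/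
def ent {r : ℕ} (v : GP r) (h : ℕ) : ℤ := if hh : h - 1 < r then v ⟨h - 1, hh⟩ else 0

/-- The chain `j_0 = 1, j_h = ` least `h`-balance point of the lattice word of `T`
weakly after `j_{h-1}` (in `{1,…,n}`), `none` once undefined. An index `j` is an
`h`-balance point iff `(T j)_h = (T j)_{h+1}` (1-indexed rows). -/
def jChain (r n : ℕ) (T : ℕ → GP r) : ℕ → Option ℕ
  | 0 => some 1
  | h + 1 =>
    match jChain r n T h with
    | none => none
    | some jp =>
      if H : ∃ j, jp ≤ j ∧ j ≤ n ∧ ent (T j) (h + 1) = ent (T j) (h + 2) then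
        some (Nat.find H)
      else none

/-- `k`: the largest `h ≤ r-1` such that `j_1, …, j_h` are all defined. -/
def kVal (r n : ℕ) (T : ℕ → GP r) : ℕ :=
  ((Finset.range r).filter fun h => (jChain r n T h).isSome).sup id

/-- `j_h`, defaulting to `0` when undefined. -/
def jval (r n : ℕ) (T : ℕ → GP r) (h : ℕ) : ℕ := (jChain r n T h).getD 0

/-- `ω_c` for `c ∈ {0,±1,…,±r}`: top-justified column of `c` ones if `c ≥ 0`,
bottom-justified column of `|c|` minus-ones if `c < 0`. -/
def omegaGP (r : ℕ) (c : ℤ) : GP r := fun i =>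
  if 0 ≤ c then (if (i : ℕ) < c.natAbs then 1 else 0)
  else (if r - c.natAbs ≤ (i : ℕ) then -1 else 0)

/-- The extremal fluctuating tableau of type `c`: partial sums of the `ω_{c_j}`. -/
def extremal (r : ℕ) (c : ℕ → ℤ) (k : ℕ) : GP r := ∑ j ∈ Finset.range k, omegaGP r (c j)

/-- Lexicographic order: the first nonzero entry of `β - α` is positive. -/
def ltLex {r : ℕ} (α β : GP r) : Prop := ∃ i : Fin r, (∀ j, j < i → α j = β j) ∧ α i < β i

/-- Cumulative sums of `|c_j|` (block boundaries). -/
def cumC (c : ℕ → ℤ) (j : ℕ) : ℕ := ∑ j' ∈ Finset.range j, (c j').natAbs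

/-- Entry `(u,v)` (for `u,v ∈ {1,…,n}`) of the reduced promotion matrix `PMr^i(T)`:
the number of cells in the block `B_u × B_v` whose promotion-matrix entry contains `i`. -/
def PMr (r n t : ℕ) (T : ℕ → GP r) (c : ℕ → ℤ) (i u v : ℕ) : ℕ :=
  (((Finset.Icc (cumC c (u - 1) + 1) (cumC c u)) ×ˢ
    (Finset.Icc (cumC c (v - 1) + 1) (cumC c v))).filter
      fun p => PMmem r n t T i p.1 p.2).card

/-- The set of `r`-row fluctuating tableaux of length `n`, shape `lam`, type `c`,
in bundled (finitely-indexed) form. -/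
def FTset (r n : ℕ) (lam : GP r) (c : Fin n → ℤ) : Set (Fin (n + 1) → GP r) :=
  {T | (∀ k, Antitone (T k)) ∧ T 0 = 0 ∧ T (Fin.last n) = lam ∧
       ∀ j : Fin n, colStep r (c j) (T j.castSucc) (T j.succ)}


/-- Number of entries exceeding `c`. -/
def cnt {r : ℕ} (α : GP r) (c : ℤ) : ℕ := (Finset.univ.filter fun j => c < α j).card

theorem cnt_comp {r : ℕ} (α : GP r) (σ : Equiv.Perm (Fin r)) (c : ℤ) :
    cnt (α ∘ σ) c = cnt α c := by
  unfold cnt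
  apply Finset.card_bij (fun j _ => σ j)
  · intro a ha; simpa using ha
  · intro a _ b _ h; exact σ.injective h
  · intro b hb
    exact ⟨σ.symm b, by simpa using hb, by simp⟩

theorem antitone_lt_iff {r : ℕ} {f : GP r} (hf : Antitone f) (c : ℤ) (i : Fin r) :
    c < f i ↔ (i : ℕ) < cnt f c := by
  constructor
  · intro h
    have : Finset.Iic i ⊆ Finset.univ.filter fun j => c < f j := by
      intro j hj
      simp only [Finset.mem_Iic] at hj
      simp only [Finset.mem_filter, Finset.mem_univ, true_and]
      exact lt_of_lt_of_le h (hf hj)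
    have := Finset.card_le_card this
    rw [Fin.card_Iic] at this
    unfold cnt; omega
  · intro h
    by_contra hc
    have : (Finset.univ.filter fun j => c < f j) ⊆ Finset.Iio i := by
      intro j hj
      simp only [Finset.mem_filter, Finset.mem_univ, true_and] at hj
      simp only [Finset.mem_Iio]
      by_contra hij
      exact hc (lt_of_lt_of_le hj (hf (not_lt.mp hij)))
    have := Finset.card_le_card this
    rw [Fin.card_Iio] at this
    unfold cnt at h; omega

theorem antitone_ext {r : ℕ} {f g : GP r} (hf : Antitone f) (hg : Antitone g)
    (h : ∀ c, cnt f c = cnt g c) : f = g := by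
  funext i
  apply le_antisymm
  · by_contra hc
    have := (antitone_lt_iff hf (g i) i).1 (not_le.mp hc)
    rw [h, ← antitone_lt_iff hg] at this
    omega
  · by_contra hc
    have := (antitone_lt_iff hg (f i) i).1 (not_le.mp hc)
    rw [← h, ← antitone_lt_iff hf] at this
    omega

theorem sortDesc_antitone {r : ℕ} (α : GP r) : Antitone (sortDesc α) := by
  intro i j hij
  exact Tuple.monotone_sort α (Fin.rev_le_rev.mpr hij)

theorem cnt_sortDesc {r : ℕ} (α : GP r) (c : ℤ) : cnt (sortDesc α) c = cnt α c := by
  have : sortDesc α = α ∘ (Fin.revPerm.trans (Tuple.sort α)) := by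
    funext i; simp [sortDesc]
  rw [this, cnt_comp]

theorem sortDesc_eq {r : ℕ} {α g : GP r} (hg : Antitone g) (h : ∀ c, cnt g c = cnt α c) :
    sortDesc α = g :=
  antitone_ext (sortDesc_antitone α) hg (fun c => by rw [cnt_sortDesc, h])

theorem sortDesc_self {r : ℕ} {g : GP r} (hg : Antitone g) : sortDesc g = g :=
  sortDesc_eq hg (fun _ => rfl)

theorem sortDesc_congr {r : ℕ} {α β : GP r} (h : ∀ c, cnt α c = cnt β c) :
    sortDesc α = sortDesc β :=
  sortDesc_eq (sortDesc_antitone β) (fun c => by rw [cnt_sortDesc, h])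

theorem eV_same {r : ℕ} (x : Fin r) : eV x x = 1 := by simp [eV]
theorem eV_ne {r : ℕ} {x y : Fin r} (h : y ≠ x) : eV x y = 0 := by simp [eV, h]

theorem cnt_add_eV {r : ℕ} (α : GP r) (x : Fin r) (c : ℤ) :
    cnt (α + eV x) c = cnt α c + if α x = c then 1 else 0 := by
  unfold cnt
  by_cases h : α x = c
  · have : (Finset.univ.filter fun j => c < (α + eV x) j)
        = insert x (Finset.univ.filter fun j => c < α j) := by
      ext j
      simp only [Finset.mem_filter, Finset.mem_univ, true_and, Finset.mem_insert, Pi.add_apply]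
      by_cases hj : j = x
      · subst hj; simp [eV_same, h]
      · simp [eV_ne hj, hj]
    rw [this, Finset.card_insert_of_notMem (by simp [h])]
    simp [h]
  · have : (Finset.univ.filter fun j => c < (α + eV x) j)
        = (Finset.univ.filter fun j => c < α j) := by
      ext j
      simp only [Finset.mem_filter, Finset.mem_univ, true_and, Pi.add_apply]
      by_cases hj : j = x
      · subst hj; rw [eV_same]; omega
      · simp [eV_ne hj]
    rw [this]; simp [h]

theorem cnt_add_eV_eq {r : ℕ} {α : GP r} {a b : Fin r} (h : α a = α b) (c : ℤ) :
    cnt (α + eV a) c = cnt (α + eV b) c := by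
  rw [cnt_add_eV, cnt_add_eV, h]

theorem revNeg_revNeg {r : ℕ} (v : GP r) : revNeg (revNeg v) = v := by
  funext i; simp [revNeg]
theorem revNeg_add {r : ℕ} (v w : GP r) : revNeg (v + w) = revNeg v + revNeg w := by
  funext i; simp [revNeg]; ring
theorem revNeg_sub {r : ℕ} (v w : GP r) : revNeg (v - w) = revNeg v - revNeg w := by
  funext i; simp [revNeg]; ring
theorem revNeg_zero {r : ℕ} : revNeg (0 : GP r) = 0 := by
  funext i; simp [revNeg]
theorem revNeg_eV {r : ℕ} (x : Fin r) : revNeg (eV x) = - eV x.rev := by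
  funext i
  simp only [revNeg, eV, Pi.neg_apply, Fin.rev_eq_iff]
theorem revNeg_antitone {r : ℕ} {v : GP r} (h : Antitone v) : Antitone (revNeg v) := by
  intro i j hij
  have := h (Fin.rev_le_rev.mpr hij)
  simp only [revNeg]; omega
theorem revNeg_inj {r : ℕ} {v w : GP r} (h : revNeg v = revNeg w) : v = w := by
  rw [← revNeg_revNeg v, h, revNeg_revNeg]

theorem cnt_revNeg {r : ℕ} (α : GP r) (c : ℤ) : cnt (revNeg α) c + cnt α (-c - 1) = r := by
  have h1 : cnt (revNeg α) c = (Finset.univ.filter fun j => ¬ (-c - 1 < α j)).card := by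
    unfold cnt
    apply Finset.card_bij (fun j _ => j.rev)
    · intro a ha
      rw [Finset.mem_filter] at ha ⊢
      have := ha.2
      simp only [revNeg] at this
      exact ⟨Finset.mem_univ _, by omega⟩
    · intro a _ b _ h; exact Fin.rev_injective h
    · intro b hb
      refine ⟨b.rev, ?_, by simp⟩
      rw [Finset.mem_filter] at hb ⊢
      have := hb.2
      refine ⟨Finset.mem_univ _, ?_⟩
      simp only [revNeg, Fin.rev_rev]
      omega
  rw [h1, add_comm]
  unfold cnt
  rw [Finset.card_filter_add_card_filter_not]
  simp

theorem sortDesc_revNeg {r : ℕ} (α : GP r) : sortDesc (revNeg α) = revNeg (sortDesc α) := by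
  apply sortDesc_eq (revNeg_antitone (sortDesc_antitone α))
  intro c
  have h1 := cnt_revNeg α c
  have h2 := cnt_revNeg (sortDesc α) c
  rw [cnt_sortDesc] at h2
  omega

theorem add_eV_antitone {r : ℕ} {g : GP r} (hg : Antitone g) {y : Fin r}
    (h : ∀ z < y, g y < g z) : Antitone (g + eV y) := by
  intro i j hij
  have h0 := hg hij
  simp only [Pi.add_apply]
  by_cases hj : j = y
  · subst hj
    by_cases hi : i = j
    · subst hi; rfl
    · have := h i (lt_of_le_of_ne hij hi)
      rw [eV_same, eV_ne hi]; omega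
  · rw [eV_ne hj]
    have : 0 ≤ eV y i := by unfold eV; split_ifs <;> omega
    omega

theorem sort_add_eV {r : ℕ} {g : GP r} (hg : Antitone g) (x : Fin r) :
    ∃ y ≤ x, g y = g x ∧ (∀ z < y, g x < g z) ∧ sortDesc (g + eV x) = g + eV y := by
  obtain ⟨y, hy⟩ : ∃ y, y ∈ (Finset.univ.filter fun z => g z = g x) ∧
      ∀ z ∈ (Finset.univ.filter fun z => g z = g x), y ≤ z := by
    have hne : (Finset.univ.filter fun z => g z = g x).Nonempty := ⟨x, by simp⟩
    exact ⟨_, Finset.min'_mem _ hne, fun z hz => Finset.min'_le _ z hz⟩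
  simp only [Finset.mem_filter, Finset.mem_univ, true_and] at hy
  obtain ⟨h1, h2⟩ := hy
  have h3 : ∀ z < y, g x < g z := by
    intro z hz
    have := hg hz.le
    rcases lt_or_eq_of_le this with h | h
    · omega
    · exact absurd (h2 z (by omega)) (not_le.mpr hz)
  refine ⟨y, h2 x rfl, h1, h3, ?_⟩
  apply sortDesc_eq
  · exact add_eV_antitone hg (by rw [h1]; exact h3)
  · exact cnt_add_eV_eq h1

theorem sort_sub_eV {r : ℕ} {g : GP r} (hg : Antitone g) (x : Fin r) :
    ∃ y ≥ x, g y = g x ∧ (∀ z > y, g z < g x) ∧ sortDesc (g - eV x) = g - eV y := by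
  obtain ⟨y, h1, h2, h3, h4⟩ := sort_add_eV (revNeg_antitone hg) x.rev
  refine ⟨y.rev, ?_, ?_, ?_, ?_⟩
  · have := Fin.rev_le_rev.mpr h1; simpa using this
  · simp only [revNeg, Fin.rev_rev] at h2; omega
  · intro z hz
    have := h3 z.rev (by have := Fin.rev_lt_rev.mpr hz; simpa using this)
    simp only [revNeg, Fin.rev_rev] at this; omega
  · have e : revNeg g + eV x.rev = revNeg (g - eV x) := by
      rw [revNeg_sub, revNeg_eV]; simp
    rw [e, sortDesc_revNeg] at h4
    apply revNeg_inj
    rw [h4, revNeg_sub, revNeg_eV]; simp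

/-- Two vectors differing by a single box. -/
def Step1 {r : ℕ} (α β : GP r) : Prop := ∃ x, β = α + eV x ∨ α = β + eV x

theorem Step1.symm {r : ℕ} {α β : GP r} (h : Step1 α β) : Step1 β α := by
  obtain ⟨x, h⟩ := h; exact ⟨x, h.symm⟩

theorem Step1.revNeg {r : ℕ} {α β : GP r} (h : Step1 α β) : Step1 (revNeg α) (revNeg β) := by
  obtain ⟨x, h | h⟩ := h
  · refine ⟨x.rev, Or.inr ?_⟩; rw [h, revNeg_add, revNeg_eV]; simp
  · refine ⟨x.rev, Or.inl ?_⟩; rw [h, revNeg_add, revNeg_eV]; simp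

/-- Shape of a unit cell of a growth diagram. -/
def CellP {r : ℕ} (κ lam μ ν : GP r) : Prop :=
  ∃ a b, a ≤ b ∧ κ a = κ b ∧ lam = κ + eV a ∧ ν = μ + eV b

def CellM {r : ℕ} (κ lam μ ν : GP r) : Prop :=
  ∃ a b, b ≤ a ∧ κ a = κ b ∧ κ = lam + eV a ∧ μ = ν + eV b

theorem cellP_of {r : ℕ} {κ lam ν : GP r} {a : Fin r} (h1 : Antitone κ) (h2 : Antitone lam)
    (h3 : Antitone ν) (ha : lam = κ + eV a) (hx : Step1 lam ν) :
    Step1 κ (sortDesc (κ + ν - lam)) ∧ CellP κ lam (sortDesc (κ + ν - lam)) ν ∧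
      lam = sortDesc (κ + ν - sortDesc (κ + ν - lam)) := by
  have key : Step1 κ (sortDesc (κ + ν - lam)) ∧ CellP κ lam (sortDesc (κ + ν - lam)) ν := by
    obtain ⟨x, hx | hx⟩ := hx
    · have e : κ + ν - lam = κ + eV x := by rw [hx]; abel
      rw [e]
      obtain ⟨y, hyx, hy1, hy2, hy3⟩ := sort_add_eV h1 x
      rw [hy3]
      refine ⟨⟨y, Or.inl rfl⟩, ?_⟩
      by_cases hxy : y = x
      · subst hxy
        exact ⟨a, a, le_rfl, rfl, ha, by rw [hx, ha]; abel⟩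
      · have hlt : y < x := lt_of_le_of_ne hyx hxy
        have hy' : ∀ z, y ≤ z → z < x → a = z := by
          intro z hz1 hz2
          have e1 := h3 hz2.le
          have e2 := h1 hz1
          have e3 := h1 hz2.le
          rw [hx, ha] at e1
          simp only [Pi.add_apply] at e1
          rw [eV_same, eV_ne (ne_of_lt hz2)] at e1
          by_contra hne
          rw [eV_ne (Ne.symm hne)] at e1
          have : 0 ≤ eV a x := by unfold eV; split_ifs <;> omega
          omega
        have hay := hy' y le_rfl hlt
        subst hay
        exact ⟨a, x, hyx, hy1, ha, by rw [hx, ha]⟩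
    · have e : κ + ν - lam = κ - eV x := by rw [hx]; abel
      rw [e]
      obtain ⟨y, hyx, hy1, hy2, hy3⟩ := sort_sub_eV h1 x
      rw [hy3]
      refine ⟨⟨y, Or.inr (by abel)⟩, ?_⟩
      have hν : ν = κ + eV a - eV x := by rw [← ha, hx]; abel
      by_cases hxy : y = x
      · subst hxy
        exact ⟨a, a, le_rfl, rfl, ha, by rw [hν]; abel⟩
      · have hlt : x < y := lt_of_le_of_ne hyx (Ne.symm hxy)
        have hax : a = x := by
          have e1 := h3 hyx
          rw [hν] at e1
          simp only [Pi.add_apply, Pi.sub_apply] at e1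
          rw [eV_same, eV_ne hxy] at e1
          by_contra hne
          rw [eV_ne (Ne.symm hne)] at e1
          have : 0 ≤ eV a y := by unfold eV; split_ifs <;> omega
          omega
        subst hax
        exact ⟨a, y, hyx, hy1.symm, ha, by rw [hν]; abel⟩
  refine ⟨key.1, key.2, ?_⟩
  obtain ⟨a', b, hab, hk, ha', hb⟩ := key.2
  have e : κ + ν - sortDesc (κ + ν - lam) = κ + eV b := by
    have : ν - sortDesc (κ + ν - lam) = eV b := by
      nth_rewrite 1 [hb]; abel
    rw [← this]; abel
  rw [e]
  symm
  apply sortDesc_eq h2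
  rw [ha']
  exact cnt_add_eV_eq hk

theorem cellM_of {r : ℕ} {κ lam ν : GP r} {a : Fin r} (h1 : Antitone κ) (h2 : Antitone lam)
    (h3 : Antitone ν) (ha : κ = lam + eV a) (hx : Step1 lam ν) :
    Step1 κ (sortDesc (κ + ν - lam)) ∧ CellM κ lam (sortDesc (κ + ν - lam)) ν ∧
      lam = sortDesc (κ + ν - sortDesc (κ + ν - lam)) := by
  have ha' : revNeg lam = revNeg κ + eV a.rev := by
    rw [ha, revNeg_add, revNeg_eV]; simp
  obtain ⟨q1, q2, q3⟩ := cellP_of (revNeg_antitone h1) (revNeg_antitone h2) (revNeg_antitone h3)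
    ha' hx.revNeg
  rw [← revNeg_add, ← revNeg_sub, sortDesc_revNeg] at q1 q2 q3
  rw [← revNeg_sub, sortDesc_revNeg] at q3
  refine ⟨?_, ?_, revNeg_inj q3⟩
  · have := q1.revNeg
    rwa [revNeg_revNeg, revNeg_revNeg] at this
  · obtain ⟨a', b, hab, hk, e1, e2⟩ := q2
    refine ⟨a'.rev, b.rev, Fin.rev_le_rev.mpr hab, ?_, ?_, ?_⟩
    · simp only [revNeg] at hk; omega
    · apply revNeg_inj; rw [revNeg_add, e1, revNeg_eV]; simp
    · apply revNeg_inj; rw [revNeg_add, e2, revNeg_eV]; simp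

theorem cell_of {r : ℕ} {κ lam ν : GP r} (h1 : Antitone κ) (h2 : Antitone lam)
    (h3 : Antitone ν) (ha : Step1 κ lam) (hx : Step1 lam ν) :
    Step1 κ (sortDesc (κ + ν - lam)) ∧
      (CellP κ lam (sortDesc (κ + ν - lam)) ν ∨ CellM κ lam (sortDesc (κ + ν - lam)) ν) ∧
      lam = sortDesc (κ + ν - sortDesc (κ + ν - lam)) := by
  obtain ⟨a, ha | ha⟩ := ha
  · obtain ⟨q1, q2, q3⟩ := cellP_of h1 h2 h3 ha hx
    exact ⟨q1, Or.inl q2, q3⟩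
  · obtain ⟨q1, q2, q3⟩ := cellM_of h1 h2 h3 ha hx
    exact ⟨q1, Or.inr q2, q3⟩

/-- A chain of subsets of the rows (encoded by prefix counts) moving upwards with time. -/
structure Chain (r : ℕ) (l : ℤ) (c : ℕ → ℕ → ℤ) : Prop where
  zero : ∀ v, c v 0 = 0
  top : ∀ v, c v r = l
  lo : ∀ v k, k < r → c v k ≤ c v (k + 1)
  hi : ∀ v k, k < r → c v (k + 1) ≤ c v k + 1
  mono : ∀ v k, k ≤ r → c v k ≤ c (v + 1) k

/-- Number of boxes (with sign) collected by a chain along a path. -/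
def Val {r : ℕ} (η : ℕ → GP r) (c : ℕ → ℕ → ℤ) (u t : ℕ) : ℤ :=
  ∑ v ∈ Finset.Ico u t, ∑ k : Fin r, (η (v + 1) k - η v k) *
    (c (v + 1) ((k : ℕ) + 1) - c (v + 1) k)

def Bd {r : ℕ} (l : ℤ) (η : ℕ → GP r) (u t : ℕ) (N : ℤ) : Prop :=
  ∀ c, Chain r l c → Val η c u t ≤ N

theorem telescope_aux (X : ℕ → ℤ) (B : ℕ → Prop) (u s t : ℕ) (hus : u < s) (hst : s ≤ t)
    (hB0 : ∀ v < s, ¬ B v) (hBs : B s) (hBmono : ∀ v, s ≤ v → B (v + 1) → B v)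
    (hX : ∀ v, s ≤ v → v ≤ t → X (s - 1) < X v) :
    1 ≤ ∑ v ∈ Finset.Ico u t, (if B (v + 1) then X (v + 1) - X v else 0) := by
  have key : ∀ t', s ≤ t' → t' ≤ t →
      (B t' → ∑ v ∈ Finset.Ico u t', (if B (v + 1) then X (v + 1) - X v else 0)
        = X t' - X (s - 1)) ∧
      (¬ B t' → 1 ≤ ∑ v ∈ Finset.Ico u t', (if B (v + 1) then X (v + 1) - X v else 0)) := by
    intro t' h1
    induction t', h1 using Nat.le_induction with
    | base =>
      intro _
      refine ⟨fun _ => ?_, fun h => absurd hBs h⟩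
      obtain ⟨s', rfl⟩ : ∃ s', s = s' + 1 := ⟨s - 1, by omega⟩
      rw [Finset.sum_Ico_succ_top (by omega)]
      rw [Finset.sum_eq_zero]
      · simp [hBs]
      · intro v hv
        rw [Finset.mem_Ico] at hv
        rw [if_neg (hB0 _ (by omega))]
    | succ t' h ih =>
      intro h2
      obtain ⟨i1, i2⟩ := ih (by omega)
      rw [Finset.sum_Ico_succ_top (by omega)]
      constructor
      · intro hb
        rw [i1 (hBmono _ h hb), if_pos hb]; ring
      · intro hb
        rw [if_neg hb, add_zero]
        by_cases hb' : B t'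
        · rw [i1 hb']
          have := hX t' h (by omega)
          omega
        · exact i2 hb'
  obtain ⟨k1, k2⟩ := key t hst le_rfl
  by_cases hb : B t
  · rw [k1 hb]
    have := hX t hst le_rfl
    omega
  · exact k2 hb

theorem inner_aux {r : ℕ} (d : Fin r → ℤ) (p q : Fin r) (hpq : (q : ℕ) = p + 1) (β : ℤ) :
    ∑ k : Fin r, d k * ((if (k : ℕ) + 1 = q then β else 0) - (if (k : ℕ) = q then β else 0))
      = β * (d p - d q) := by
  have h : ∀ k : Fin r, d k * ((if (k : ℕ) + 1 = q then β else 0) -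
      (if (k : ℕ) = q then β else 0)) =
      (if k = p then β * d p else 0) - (if k = q then β * d q else 0) := by
    intro k
    have e1 : ((k : ℕ) + 1 = q) ↔ k = p := by rw [Fin.ext_iff]; omega
    have e2 : ((k : ℕ) = q) ↔ k = q := by rw [Fin.ext_iff]
    simp only [e1, e2]
    by_cases h1 : k = p
    · subst h1
      have : ¬ k = q := by rw [Fin.ext_iff]; omega
      simp [this]; ring
    · by_cases h2 : k = q
      · subst h2; simp [h1]; ring
      · simp [h1, h2]
  rw [Finset.sum_congr rfl (fun k _ => h k), Finset.sum_sub_distrib]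
  simp; ring

theorem inner_eV {r : ℕ} (w : Fin r → ℤ) (p q : Fin r) :
    ∑ k : Fin r, (eV p k - eV q k) * w k = w p - w q := by
  simp [eV, sub_mul, Finset.sum_sub_distrib]

theorem val_change {r : ℕ} (ζ ζ' : ℕ → GP r) (p q : Fin r) (s u t : ℕ) (c : ℕ → ℕ → ℤ)
    (h : ∀ v, u ≤ v → v ≤ t → ζ' v = ζ v + if v < s then eV p - eV q else 0) :
    Val ζ' c u t = Val ζ c u t + if u < s ∧ s ≤ t then
      (c s (q + 1) - c s q) - (c s (p + 1) - c s p) else 0 := by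
  have h1 : Val ζ' c u t = Val ζ c u t + ∑ v ∈ Finset.Ico u t, if s = v + 1 then
      (c s (q + 1) - c s q) - (c s (p + 1) - c s p) else 0 := by
    unfold Val
    rw [← Finset.sum_add_distrib]
    apply Finset.sum_congr rfl
    intro v hv
    rw [Finset.mem_Ico] at hv
    rw [h v (by omega) (by omega), h (v + 1) (by omega) (by omega)]
    by_cases hs : s = v + 1
    · subst hs
      have := inner_eV (fun k : Fin r => c (v + 1) (k + 1) - c (v + 1) k) q p
      simp only [if_true, lt_irrefl, if_false, Nat.lt_succ_self]
      rw [← this, ← Finset.sum_add_distrib]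
      apply Finset.sum_congr rfl
      intro k _
      simp only [Pi.add_apply, Pi.sub_apply, Pi.zero_apply]
      ring
    · simp only [hs, if_false, add_zero]
      apply Finset.sum_congr rfl
      intro k _
      by_cases h2 : v < s
      · have h3 : v + 1 < s := by omega
        simp only [h2, h3, if_true, Pi.add_apply]; ring
      · have h3 : ¬ v + 1 < s := by omega
        simp only [h2, h3, if_false, Pi.add_apply]; simp
  rw [h1]
  congr 1
  by_cases hs : u < s ∧ s ≤ t
  · rw [if_pos hs]
    obtain ⟨s', rfl⟩ : ∃ s', s = s' + 1 := ⟨s - 1, by omega⟩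
    simp only [Nat.add_right_cancel_iff]
    rw [Finset.sum_ite_eq, if_pos (by rw [Finset.mem_Ico]; omega)]
  · rw [if_neg hs]
    apply Finset.sum_eq_zero
    intro v hv
    rw [Finset.mem_Ico] at hv
    rw [if_neg (by omega)]

theorem bd_elem {r : ℕ} (ζ ζ' : ℕ → GP r) (p q : Fin r) (hpq : (q : ℕ) = p + 1) (s u t : ℕ)
    (h : ∀ v, u ≤ v → v ≤ t → ζ' v = ζ v + if v < s then eV p - eV q else 0)
    (hX : u < s → ∀ v, s ≤ v → v ≤ t → ζ (s - 1) p - ζ (s - 1) q < ζ v p - ζ v q)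
    (l N : ℤ) (hB : Bd l ζ u t N) : Bd l ζ' u t N := by
  intro c hc
  have h0 := hB c hc
  rw [val_change ζ ζ' p q s u t c h]
  by_cases hs : u < s ∧ s ≤ t
  swap
  · rw [if_neg hs]; omega
  rw [if_pos hs, ← hpq]
  have l1 := hc.lo s p p.2
  have l2 := hc.hi s p p.2
  have l3 := hc.lo s q q.2
  have l4 := hc.hi s q q.2
  rw [← hpq] at l1 l2
  let bad : ℕ → Prop := fun v => c v (q + 1) = c v q + 1 ∧ c v q = c v p
  by_cases hbad : bad s
  swap
  · have : ¬ (c s (q + 1) = c s q + 1 ∧ c s q = c s p) := hbad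
    omega
  let B : ℕ → Prop := fun v => s ≤ v ∧ ∀ v', s ≤ v' → v' ≤ v → bad v'
  let c' : ℕ → ℕ → ℤ := fun v k => c v k + if k = q then (if B v then 1 else 0) else 0
  have hBb : ∀ v, B v → c v (q + 1) = c v q + 1 ∧ c v q = c v p := fun v hv => hv.2 v hv.1 le_rfl
  have hc' : Chain r l c' := by
    refine ⟨?_, ?_, ?_, ?_, ?_⟩
    · intro v
      simp only [c']
      rw [if_neg (by omega), hc.zero]; rfl
    · intro v
      simp only [c']
      rw [if_neg (by have := q.2; omega), hc.top]; ring
    · intro v k hk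
      have := hc.lo v k hk
      simp only [c']
      by_cases hkq : k = q
      · subst hkq
        have hne : ¬ ((q : ℕ) + 1 = q) := by omega
        rw [if_pos rfl, if_neg hne]
        by_cases hb : B v
        · have := hBb v hb; rw [if_pos hb]; omega
        · rw [if_neg hb]; omega
      · rw [if_neg hkq]
        split_ifs <;> omega
    · intro v k hk
      have := hc.hi v k hk
      simp only [c']
      by_cases hkq : k + 1 = q
      · have hne : ¬ (k = (q : ℕ)) := by omega
        rw [if_pos hkq, if_neg hne]
        by_cases hb : B v
        · have := hBb v hb
          have hkp : k = p := by omega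
          subst hkp
          rw [hkq]; rw [if_pos hb]; omega
        · rw [if_neg hb]; omega
      · rw [if_neg hkq]
        split_ifs <;> omega
    · intro v k hk
      have := hc.mono v k hk
      simp only [c']
      by_cases hkq : k = q
      · subst hkq
        rw [if_pos rfl, if_pos rfl]
        by_cases hb : B v
        · by_cases hb' : B (v + 1)
          · rw [if_pos hb, if_pos hb']; omega
          · rw [if_pos hb, if_neg hb']
            have b1 := hBb v hb
            have m1 := hc.mono v p p.2.le
            have m2 := hc.mono v (q + 1) (by have := q.2; omega)
            have m3 := hc.lo (v + 1) p p.2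
            have m4 := hc.hi (v + 1) q q.2
            rw [← hpq] at m3
            by_contra hcon
            apply hb'
            refine ⟨by have := hb.1; omega, ?_⟩
            intro v' hv1 hv2
            rcases Nat.lt_or_ge v' (v + 1) with h3 | h3
            · exact hb.2 v' hv1 (by omega)
            · have : v' = v + 1 := by omega
              subst this
              exact ⟨by omega, by omega⟩
        · rw [if_neg hb]; split_ifs <;> omega
      · rw [if_neg hkq, if_neg hkq]; omega
  have h1 := hB c' hc'
  have h2 : Val ζ c' u t = Val ζ c u t + ∑ v ∈ Finset.Ico u t,
      (if B (v + 1) then (ζ (v + 1) p - ζ (v + 1) q) - (ζ v p - ζ v q) else 0) := by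
    unfold Val
    rw [← Finset.sum_add_distrib]
    apply Finset.sum_congr rfl
    intro v _
    have := inner_aux (fun k => ζ (v + 1) k - ζ v k) p q hpq (if B (v + 1) then 1 else 0)
    have e : (if B (v + 1) then (ζ (v + 1) p - ζ (v + 1) q) - (ζ v p - ζ v q) else 0) =
      (if B (v + 1) then 1 else 0) * ((ζ (v + 1) p - ζ v p) - (ζ (v + 1) q - ζ v q)) := by
      split_ifs <;> ring
    rw [e, ← this, ← Finset.sum_add_distrib]
    apply Finset.sum_congr rfl
    intro k _
    simp only [c']
    ring
  have h3 : 1 ≤ ∑ v ∈ Finset.Ico u t,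
      (if B (v + 1) then (ζ (v + 1) p - ζ (v + 1) q) - (ζ v p - ζ v q) else 0) := by
   convert telescope_aux (fun v => ζ v p - ζ v q) B u s t hs.1 hs.2
    (fun v hv hb => by have := hb.1; omega)
    ⟨le_rfl, fun v' a b => by have : v' = s := by omega
                              rw [this]; exact hbad⟩
    (fun v hv hb => ⟨hv, fun v' a b => hb.2 v' a (by omega)⟩)
    (hX hs.1)
  have hb2 : c s (q + 1) = c s q + 1 ∧ c s q = c s p := hbad
  omega

theorem abel_aux : ∀ (r : ℕ) (η : Fin (r + 1) → ℤ) (g : ℕ → ℤ), Antitone η → g 0 = 0 →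
    (∀ k, k ≤ r + 1 → 0 ≤ g k) →
    η (Fin.last r) * g (r + 1) ≤ ∑ k : Fin (r + 1), η k * (g ((k : ℕ) + 1) - g k) := by
  intro r
  induction r with
  | zero => intro η g _ h0 _; simp [h0]
  | succ r ih =>
    intro η g hη h0 hg
    rw [Fin.sum_univ_castSucc]
    have := ih (fun k => η k.castSucc) g (fun a b h => hη (Fin.castSucc_le_castSucc_iff.mpr h)) h0
      (fun k hk => hg k (by omega))
    simp only [Fin.val_castSucc, Fin.val_last] at this ⊢
    have h1 : η (Fin.last (r + 1)) ≤ η (Fin.last r).castSucc := hη (Fin.le_last _)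
    have h2 := hg (r + 1) (by omega)
    nlinarith

theorem abel {r : ℕ} {η : GP r} (hη : Antitone η) (c c' : ℕ → ℤ) (h0 : c 0 = c' 0)
    (hr : c r = c' r) (h : ∀ k ≤ r, c k ≤ c' k) :
    ∑ k : Fin r, η k * (c ((k : ℕ) + 1) - c k) ≤ ∑ k : Fin r, η k * (c' ((k : ℕ) + 1) - c' k) := by
  cases r with
  | zero => simp
  | succ r =>
    have := abel_aux r η (fun k => c' k - c k) hη (by simp [h0]) (fun k hk => by
      have := h k hk; omega)
    simp only [hr, sub_self, mul_zero] at this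
    have e : ∑ k : Fin (r + 1), η k * (c' ((k : ℕ) + 1) - c ((k : ℕ) + 1) - (c' k - c k)) =
      ∑ k : Fin (r + 1), η k * (c' ((k : ℕ) + 1) - c' k) -
      ∑ k : Fin (r + 1), η k * (c ((k : ℕ) + 1) - c k) := by
      rw [← Finset.sum_sub_distrib]
      apply Finset.sum_congr rfl; intro k _; ring
    rw [e] at this
    linarith

theorem pSum_eq {r : ℕ} (η : GP r) (l : ℕ) :
    pSum η l = ∑ k : Fin r, η k * (((min ((k : ℕ) + 1) l : ℕ) : ℤ) - ((min (k : ℕ) l : ℕ) : ℤ)) := by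
  unfold pSum
  rw [Finset.sum_filter]
  apply Finset.sum_congr rfl
  intro k _
  split_ifs with h
  · rw [min_eq_left (by omega), min_eq_left (by omega)]; push_cast; ring
  · rw [min_eq_right (by omega), min_eq_right (by omega)]; ring

theorem bd_base {r : ℕ} (η : ℕ → GP r) (u t : ℕ) (hut : u ≤ t) (l : ℕ)
    (hη : ∀ v, u ≤ v → v ≤ t → Antitone (η v)) (h0 : η u = 0) :
    Bd l η u t (pSum (η t) l) := by
  intro c hc
  have key : ∀ t', u ≤ t' → t' ≤ t →
      Val η c u t' ≤ ∑ k : Fin r, η t' k * (c t' ((k : ℕ) + 1) - c t' k) := by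
    intro t' h1
    induction t', h1 using Nat.le_induction with
    | base => intro _; simp [Val, h0]
    | succ t' h ih =>
      intro h2
      have i1 := ih (by omega)
      have e : Val η c u (t' + 1) = Val η c u t' + ∑ k : Fin r, (η (t' + 1) k - η t' k) *
          (c (t' + 1) ((k : ℕ) + 1) - c (t' + 1) k) := by
        unfold Val; rw [Finset.sum_Ico_succ_top (by omega)]
      have a := abel (hη t' h (by omega)) (c t') (c (t' + 1)) (by rw [hc.zero, hc.zero])
        (by rw [hc.top, hc.top]) (fun k hk => hc.mono t' k hk)
      have e2 : ∑ k : Fin r, (η (t' + 1) k - η t' k) *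
          (c (t' + 1) ((k : ℕ) + 1) - c (t' + 1) k) =
          ∑ k : Fin r, η (t' + 1) k * (c (t' + 1) ((k : ℕ) + 1) - c (t' + 1) k) -
          ∑ k : Fin r, η t' k * (c (t' + 1) ((k : ℕ) + 1) - c (t' + 1) k) := by
        rw [← Finset.sum_sub_distrib]
        apply Finset.sum_congr rfl; intro k _; ring
      rw [e, e2]; linarith
  refine (key t hut le_rfl).trans ?_
  rw [pSum_eq]
  have b1 : ∀ k, k ≤ r → c t k ≤ k := by
    intro k
    induction k with
    | zero => intro _; rw [hc.zero]; simp
    | succ k ih =>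
      intro hk
      have := hc.hi t k (by omega)
      have := ih (by omega)
      push_cast; omega
  have b2 : ∀ j, ∀ k, k + j = r → c t k ≤ l := by
    intro j
    induction j with
    | zero => intro k hk; have : k = r := by omega
              subst this; rw [hc.top]
    | succ j ih =>
      intro k hk
      have := hc.lo t k (by omega)
      have := ih (k + 1) (by omega)
      omega
  apply abel (hη t hut le_rfl) (c t) (fun k => ((min k l : ℕ) : ℤ))
  · rw [hc.zero]; simp
  · have h1 := b1 r le_rfl
    rw [hc.top] at h1 ⊢
    have : l ≤ r := by exact_mod_cast h1
    rw [min_eq_right this]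
  · intro k hk
    have h1 := b1 k hk
    have h2 := b2 (r - k) k (by omega)
    rw [Nat.cast_min]
    exact le_min h1 h2

theorem bd_const {r : ℕ} (η : ℕ → GP r) (u t : ℕ) (hut : u ≤ t) (k : ℕ) (hk : k ≤ r) (N : ℤ)
    (h : Bd ((r - k : ℕ) : ℤ) η u t N) :
    (∑ j, η t j - pSum (η t) k) - (∑ j, η u j - pSum (η u) k) ≤ N := by
  have hc : Chain r ((r - k : ℕ) : ℤ) (fun _ j => ((j - k : ℕ) : ℤ)) := by
    refine ⟨by simp, by simp, ?_, ?_, by simp⟩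
    · intro v j _; omega
    · intro v j _; omega
  have h1 := h _ hc
  refine le_trans (le_of_eq ?_) h1
  have e : ∀ v : GP r, ∑ j, v j - pSum v k =
      ∑ j : Fin r, v j * (((((j : ℕ) + 1) - k : ℕ) : ℤ) - (((j : ℕ) - k : ℕ) : ℤ)) := by
    intro v
    unfold pSum
    rw [Finset.sum_filter, ← Finset.sum_sub_distrib]
    apply Finset.sum_congr rfl
    intro j _
    split_ifs with hj
    · have e1 : (j : ℕ) + 1 - k = 0 := by omega
      have e2 : (j : ℕ) - k = 0 := by omega
      rw [e1, e2]; simp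
    · have e1 : (j : ℕ) + 1 - k = ((j : ℕ) - k) + 1 := by omega
      rw [e1]; push_cast; ring
  unfold Val
  have tel : ∀ w : ℕ → ℤ, ∑ v ∈ Finset.Ico u t, (w (v + 1) - w v) = w t - w u :=
    fun w => Finset.sum_Ico_sub w hut
  rw [← tel (fun v => ∑ j, η v j - pSum (η v) k)]
  apply Finset.sum_congr rfl
  intro v _
  rw [e, e, ← Finset.sum_sub_distrib]
  apply Finset.sum_congr rfl; intro j _; ring

theorem first_time (A : ℕ → Prop) (u t : ℕ) (hA : ∀ v, u ≤ v → v < t → A v → A (v + 1)) :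
    ∃ s, u ≤ s ∧ (∀ v, u ≤ v → v ≤ t → (v < s ↔ ¬ A v)) := by
  by_cases h : ∃ v, u ≤ v ∧ v ≤ t ∧ A v
  · refine ⟨Nat.find h, (Nat.find_spec h).1, ?_⟩
    intro v h1 h2
    constructor
    · intro h3 h4
      exact Nat.find_min h h3 ⟨h1, h2, h4⟩
    · intro h3
      by_contra h4
      apply h3
      obtain ⟨a1, a2, a3⟩ := Nat.find_spec h
      have : ∀ v, Nat.find h ≤ v → v ≤ t → A v := by
        intro v hv
        induction v, hv using Nat.le_induction with
        | base => intro _; exact a3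
        | succ v hv ih => intro hvt; exact hA v (by omega) (by omega) (ih (by omega))
      exact this v (by omega) h2
  · refine ⟨max u (t + 1), by omega, ?_⟩
    intro v h1 h2
    refine ⟨fun _ h3 => h ⟨v, h1, h2, h3⟩, fun _ => by omega⟩

theorem val_congr {r : ℕ} (η η' : ℕ → GP r) (c : ℕ → ℕ → ℤ) (u t : ℕ)
    (h : ∀ v, u ≤ v → v < t → η (v + 1) - η v = η' (v + 1) - η' v) :
    Val η c u t = Val η' c u t := by
  unfold Val
  apply Finset.sum_congr rfl
  intro v hv
  rw [Finset.mem_Ico] at hv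
  apply Finset.sum_congr rfl
  intro k _
  have := congrFun (h v hv.1 hv.2) k
  simp only [Pi.sub_apply] at this
  rw [this]

theorem slideP {r : ℕ} (η η' : ℕ → GP r) (u t : ℕ)
    (hη : ∀ v, u ≤ v → v ≤ t → Antitone (η v)) (hη' : ∀ v, u ≤ v → v ≤ t → Antitone (η' v))
    (w : ℕ → Fin r) (h : ∀ v, u ≤ v → v ≤ t → η' v = η v + eV (w v))
    (hm : ∀ v, u ≤ v → v < t → w v ≤ w (v + 1) ∧ η v (w v) = η v (w (v + 1)))
    (l N : ℤ) (hB : Bd l η u t N) : Bd l η' u t N := by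
  have key : ∀ d, ∀ q : Fin r, (q : ℕ) + d + 1 = r →
      Bd l (fun v => η v + eV (max (w v) q)) u t N := by
    intro d
    induction d with
    | zero =>
      intro q hq c hc
      rw [val_congr _ η]
      · exact hB c hc
      · intro v _ _
        have e : ∀ x : Fin r, max x q = q := fun x => max_eq_right (by
          rw [Fin.le_def]; have := x.2; omega)
        simp only [e]; abel
    | succ d ih =>
      intro p hp
      obtain ⟨q, hq⟩ : ∃ q : Fin r, (q : ℕ) = p + 1 := ⟨⟨p + 1, by omega⟩, rfl⟩
      have hB1 := ih q (by omega)
      have hpq : p < q := by rw [Fin.lt_def]; omega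
      obtain ⟨s, hus, hs⟩ := first_time (fun v => q ≤ w v) u t
        (fun v h1 h2 h3 => h3.trans (hm v h1 h2).1)
      refine bd_elem (fun v => η v + eV (max (w v) q)) _ p q hq s u t ?_ ?_ l N hB1
      · intro v h1 h2
        by_cases hv : v < s
        · have : w v < q := not_le.mp ((hs v h1 h2).1 hv)
          have h3 : w v ≤ p := by rw [Fin.le_def]; rw [Fin.lt_def] at this; omega
          rw [if_pos hv, max_eq_right h3, max_eq_right this.le]; abel
        · have : q ≤ w v := by by_contra h3; exact hv ((hs v h1 h2).2 h3)
          rw [if_neg hv, max_eq_left this, max_eq_left (hpq.le.trans this)]; simp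
      · intro hus v h1 h2
        have z1 : w (s - 1) < q := not_le.mp ((hs (s - 1) (by omega) (by omega)).1 (by omega))
        have z2 : q ≤ w s := by
          by_contra h3; exact absurd ((hs s (by omega) (by omega)).2 h3) (by omega)
        have z3 : q ≤ w v := by
          by_contra h3; exact absurd ((hs v (by omega) (by omega)).2 h3) (by omega)
        have z4 : w (s - 1) ≤ p := by rw [Fin.le_def]; rw [Fin.lt_def] at z1; omega
        have z5 := (hm (s - 1) (by omega) (by omega)).2
        rw [show s - 1 + 1 = s by omega] at z5
        have an := hη (s - 1) (by omega) (by omega)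
        have y1 := an z4
        have y2 := an hpq.le
        have y3 := an z2
        have y4 := hη' v (by omega) h2 hpq.le
        rw [h v (by omega) h2] at y4
        simp only [max_eq_left z3, max_eq_right z1.le]
        simp only [Pi.add_apply, eV_same, eV_ne hpq.ne] at y4 ⊢
        omega
  intro c hc
  rcases Nat.eq_zero_or_pos r with h0 | h0
  · exact absurd (w 0).2 (by omega)
  have := key (r - 1) ⟨0, h0⟩ (by simp; omega) c hc
  rw [val_congr η' _ c u t _]
  · exact this
  · intro v h1 h2
    have e : ∀ x : Fin r, max x ⟨0, h0⟩ = x := fun x => max_eq_left (by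
      rw [Fin.le_def]; simp)
    simp only [e]
    rw [h v h1 h2.le, h (v + 1) (by omega) (by omega)]

theorem slideM {r : ℕ} (η η' : ℕ → GP r) (u t : ℕ)
    (hη : ∀ v, u ≤ v → v ≤ t → Antitone (η v)) (hη' : ∀ v, u ≤ v → v ≤ t → Antitone (η' v))
    (w : ℕ → Fin r) (h : ∀ v, u ≤ v → v ≤ t → η' v = η v - eV (w v))
    (hm : ∀ v, u ≤ v → v < t → w (v + 1) ≤ w v ∧ η v (w v) = η v (w (v + 1)))
    (l N : ℤ) (hB : Bd l η u t N) : Bd l η' u t N := by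
  have key : ∀ d, ∀ q : Fin r, (q : ℕ) = d →
      Bd l (fun v => η v - eV (min (w v) q)) u t N := by
    intro d
    induction d with
    | zero =>
      intro q hq c hc
      rw [val_congr _ η]
      · exact hB c hc
      · intro v _ _
        have e : ∀ x : Fin r, min x q = q := fun x => min_eq_right (by
          rw [Fin.le_def]; omega)
        simp only [e]; abel
    | succ d ih =>
      intro q hq
      obtain ⟨p, hp⟩ : ∃ p : Fin r, (q : ℕ) = p + 1 := ⟨⟨d, by omega⟩, by simpa using hq⟩
      have hB1 := ih p (by omega)
      have hpq : p < q := by rw [Fin.lt_def]; omega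
      obtain ⟨s, hus, hs⟩ := first_time (fun v => w v ≤ p) u t
        (fun v h1 h2 h3 => (hm v h1 h2).1.trans h3)
      refine bd_elem (fun v => η v - eV (min (w v) p)) _ p q hp s u t ?_ ?_ l N hB1
      · intro v h1 h2
        by_cases hv : v < s
        · have : p < w v := not_le.mp ((hs v h1 h2).1 hv)
          have h3 : q ≤ w v := by rw [Fin.le_def]; rw [Fin.lt_def] at this; omega
          rw [if_pos hv, min_eq_right h3, min_eq_right this.le]; abel
        · have : w v ≤ p := by by_contra h3; exact hv ((hs v h1 h2).2 h3)
          rw [if_neg hv, min_eq_left this, min_eq_left (this.trans hpq.le)]; simp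
      · intro hus v h1 h2
        have z1 : p < w (s - 1) := not_le.mp ((hs (s - 1) (by omega) (by omega)).1 (by omega))
        have z2 : w s ≤ p := by
          by_contra h3; exact absurd ((hs s (by omega) (by omega)).2 h3) (by omega)
        have z3 : w v ≤ p := by
          by_contra h3; exact absurd ((hs v (by omega) (by omega)).2 h3) (by omega)
        have z4 : q ≤ w (s - 1) := by rw [Fin.le_def]; rw [Fin.lt_def] at z1; omega
        have z5 := (hm (s - 1) (by omega) (by omega)).2
        rw [show s - 1 + 1 = s by omega] at z5
        have an := hη (s - 1) (by omega) (by omega)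
        have y1 := an z4
        have y2 := an hpq.le
        have y3 := an z2
        have y4 := hη' v (by omega) h2 hpq.le
        rw [h v (by omega) h2] at y4
        simp only [min_eq_left z3, min_eq_right z1.le]
        simp only [Pi.sub_apply, eV_same, eV_ne hpq.ne'] at y4 ⊢
        omega
  intro c hc
  have h0 : 0 < r := by have := (w 0).2; omega
  have := key (r - 1) ⟨r - 1, by omega⟩ rfl c hc
  rw [val_congr η' _ c u t _]
  · exact this
  · intro v h1 h2
    have e : ∀ x : Fin r, min x ⟨r - 1, by omega⟩ = x := fun x => min_eq_left (by
      rw [Fin.le_def]; simp; omega)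
    simp only [e]
    rw [h v h1 h2.le, h (v + 1) (by omega) (by omega)]

theorem eV_inj {r : ℕ} {a b : Fin r} (h : (eV a : GP r) = eV b) : a = b := by
  by_contra hne
  have := congrFun h a
  rw [eV_same, eV_ne hne] at this
  exact one_ne_zero this

theorem eV_ne_neg {r : ℕ} {α β : GP r} {a b : Fin r} (h : β = α + eV a) (h' : α = β + eV b) :
    False := by
  have := congrFun h a
  rw [h'] at this
  simp only [Pi.add_apply, eV_same] at this
  have : 0 ≤ eV b a := by unfold eV; split_ifs <;> omega
  omega

theorem slide {r : ℕ} (η η' : ℕ → GP r) (u t : ℕ) (hut : u ≤ t)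
    (hη : ∀ v, u ≤ v → v ≤ t → Antitone (η v)) (hη' : ∀ v, u ≤ v → v ≤ t → Antitone (η' v))
    (hs : Step1 (η u) (η' u))
    (hc : ∀ v, u ≤ v → v < t → CellP (η v) (η' v) (η (v + 1)) (η' (v + 1)) ∨
      CellM (η v) (η' v) (η (v + 1)) (η' (v + 1)))
    (l N : ℤ) (hB : Bd l η u t N) : Bd l η' u t N := by
  obtain ⟨x, hx | hx⟩ := hs
  · have hP : ∀ v, u ≤ v → v ≤ t → ∃ y, η' v = η v + eV y := by
      intro v hv
      induction v, hv using Nat.le_induction with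
      | base => intro _; exact ⟨x, hx⟩
      | succ v hv ih =>
        intro hvt
        obtain ⟨y, hy⟩ := ih (by omega)
        rcases hc v hv (by omega) with ⟨a, b, _, _, _, h⟩ | ⟨a, b, _, _, h, _⟩
        · exact ⟨b, h⟩
        · exact (eV_ne_neg hy h).elim
    have hP' : ∀ v, ∃ y, u ≤ v → v ≤ t → η' v = η v + eV y := by
      intro v
      by_cases h : u ≤ v ∧ v ≤ t
      · obtain ⟨y, hy⟩ := hP v h.1 h.2; exact ⟨y, fun _ _ => hy⟩
      · exact ⟨x, fun h1 h2 => absurd ⟨h1, h2⟩ h⟩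
    choose w hw using hP'
    refine slideP η η' u t hη hη' w hw ?_ l N hB
    intro v h1 h2
    rcases hc v h1 h2 with ⟨a, b, hab, hk, e1, e2⟩ | ⟨a, b, _, _, h, _⟩
    · have f1 := hw v h1 h2.le
      have f2 := hw (v + 1) (by omega) (by omega)
      rw [e1] at f1; rw [e2] at f2
      have g1 := eV_inj (add_left_cancel f1)
      have g2 := eV_inj (add_left_cancel f2)
      rw [← g1, ← g2]; exact ⟨hab, hk⟩
    · exact (eV_ne_neg (hw v h1 h2.le) h).elim
  · have hP : ∀ v, u ≤ v → v ≤ t → ∃ y, η v = η' v + eV y := by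
      intro v hv
      induction v, hv using Nat.le_induction with
      | base => intro _; exact ⟨x, hx⟩
      | succ v hv ih =>
        intro hvt
        obtain ⟨y, hy⟩ := ih (by omega)
        rcases hc v hv (by omega) with ⟨a, b, _, _, h, _⟩ | ⟨a, b, _, _, _, h⟩
        · exact (eV_ne_neg h hy).elim
        · exact ⟨b, h⟩
    have hP' : ∀ v, ∃ y, u ≤ v → v ≤ t → η v = η' v + eV y := by
      intro v
      by_cases h : u ≤ v ∧ v ≤ t
      · obtain ⟨y, hy⟩ := hP v h.1 h.2; exact ⟨y, fun _ _ => hy⟩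
      · exact ⟨x, fun h1 h2 => absurd ⟨h1, h2⟩ h⟩
    choose w hw using hP'
    refine slideM η η' u t hη hη' w (fun v h1 h2 => by rw [hw v h1 h2]; abel) ?_ l N hB
    intro v h1 h2
    rcases hc v h1 h2 with ⟨a, b, _, _, h, _⟩ | ⟨a, b, hab, hk, e1, e2⟩
    · exact (eV_ne_neg h (hw v h1 h2.le)).elim
    · have f1 := hw v h1 h2.le
      have f2 := hw (v + 1) (by omega) (by omega)
      have g1 := eV_inj (add_left_cancel (e1.symm.trans f1))
      have g2 := eV_inj (add_left_cancel (e2.symm.trans f2))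
      rw [← g1, ← g2]; exact ⟨hab, hk⟩

/-- Triangular growth diagrams. -/
structure Tri {r : ℕ} (t : ℕ) (G : ℕ → ℕ → GP r) : Prop where
  diag : ∀ j, j ≤ t → G j j = 0
  anti : ∀ j v, j ≤ v → v ≤ t → Antitone (G j v)
  hstep : ∀ j v, j ≤ v → v < t → Step1 (G j v) (G j (v + 1))
  vstep : ∀ j v, j < v → v ≤ t → Step1 (G (j + 1) v) (G j v)
  rule : ∀ j v, j < v → v < t →
    G (j + 1) (v + 1) = sortDesc (G (j + 1) v + G j (v + 1) - G j v)
  rule' : ∀ j v, j < v → v < t →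
    G j v = sortDesc (G (j + 1) v + G j (v + 1) - G (j + 1) (v + 1))

theorem Tri.cell {r t : ℕ} {G : ℕ → ℕ → GP r} (h : Tri t G) (j v : ℕ) (h1 : j < v) (h2 : v < t) :
    CellP (G (j + 1) v) (G j v) (G (j + 1) (v + 1)) (G j (v + 1)) ∨
      CellM (G (j + 1) v) (G j v) (G (j + 1) (v + 1)) (G j (v + 1)) := by
  rw [h.rule j v h1 h2]
  exact (cell_of (h.anti _ _ (by omega) (by omega)) (h.anti _ _ (by omega) (by omega))
    (h.anti _ _ (by omega) (by omega)) (h.vstep j v h1 h2.le) (h.hstep j v h1.le h2)).2.1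

theorem Tri.revNeg {r t : ℕ} {G : ℕ → ℕ → GP r} (h : Tri t G) :
    Tri t (fun j v => FT.revNeg (G j v)) where
  diag j hj := by rw [h.diag j hj, revNeg_zero]
  anti j v h1 h2 := revNeg_antitone (h.anti j v h1 h2)
  hstep j v h1 h2 := (h.hstep j v h1 h2).revNeg
  vstep j v h1 h2 := (h.vstep j v h1 h2).revNeg
  rule j v h1 h2 := by
    rw [h.rule j v h1 h2, ← revNeg_add, ← revNeg_sub, sortDesc_revNeg]
  rule' j v h1 h2 := by
    rw [← revNeg_add, ← revNeg_sub, sortDesc_revNeg, ← h.rule' j v h1 h2]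

theorem Tri.refl {r t : ℕ} {G : ℕ → ℕ → GP r} (h : Tri t G) :
    Tri t (fun j v => G (t - v) (t - j)) where
  diag j hj := h.diag _ (by omega)
  anti j v h1 h2 := h.anti _ _ (by omega) (by omega)
  hstep j v h1 h2 := by
    have := h.vstep (t - (v + 1)) (t - j) (by omega) (by omega)
    rwa [show t - (v + 1) + 1 = t - v by omega] at this
  vstep j v h1 h2 := by
    have := h.hstep (t - v) (t - (j + 1)) (by omega) (by omega)
    rwa [show t - (j + 1) + 1 = t - j by omega] at this
  rule j v h1 h2 := by
    have := h.rule' (t - (v + 1)) (t - (j + 1)) (by omega) (by omega)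
    rwa [show t - (v + 1) + 1 = t - v by omega, show t - (j + 1) + 1 = t - j by omega] at this
  rule' j v h1 h2 := by
    have := h.rule (t - (v + 1)) (t - (j + 1)) (by omega) (by omega)
    rwa [show t - (v + 1) + 1 = t - v by omega, show t - (j + 1) + 1 = t - j by omega] at this

theorem Tri.T1 {r t : ℕ} {G : ℕ → ℕ → GP r} (h : Tri t G) (u : ℕ) (hu : u ≤ t) (k : ℕ)
    (hk : k ≤ r) :
    (∑ j, G 0 t j - pSum (G 0 t) k) - (∑ j, G 0 u j - pSum (G 0 u) k) ≤
      pSum (G u t) (r - k) := by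
  have key : ∀ d j, j + d = u → Bd ((r - k : ℕ) : ℤ) (G j) u t (pSum (G u t) (r - k)) := by
    intro d
    induction d with
    | zero =>
      intro j hj
      have : j = u := by omega
      subst this
      exact bd_base _ _ _ hu _ (fun v h1 h2 => h.anti _ _ h1 h2) (h.diag _ hu)
    | succ d ih =>
      intro j hj
      exact slide (G (j + 1)) (G j) u t hu (fun v h1 h2 => h.anti _ _ (by omega) h2)
        (fun v h1 h2 => h.anti _ _ (by omega) h2) (h.vstep j u (by omega) hu)
        (fun v h1 h2 => h.cell j v (by omega) h2) _ _ (ih (j + 1) (by omega))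
  exact bd_const _ u t hu k hk _ (key u 0 (by omega))

theorem pSum_succ {r : ℕ} (v : GP r) (i : ℕ) (hi : i < r) :
    pSum v (i + 1) = pSum v i + v ⟨i, hi⟩ := by
  unfold pSum
  have : (Finset.univ.filter fun j : Fin r => (j : ℕ) < i + 1) =
      insert ⟨i, hi⟩ (Finset.univ.filter fun j : Fin r => (j : ℕ) < i) := by
    ext j; simp [Fin.ext_iff]; omega
  rw [this, Finset.sum_insert (by simp)]
  ring

theorem pSum_zero {r : ℕ} (v : GP r) : pSum v 0 = 0 := by simp [pSum]

theorem pSum_full {r : ℕ} (v : GP r) : pSum v r = ∑ j, v j := by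
  unfold pSum; congr 1; ext j; simp

theorem pSum_add {r : ℕ} (v w : GP r) (i : ℕ) : pSum (v + w) i = pSum v i + pSum w i := by
  simp [pSum, Finset.sum_add_distrib]

theorem pSum_sub {r : ℕ} (v w : GP r) (i : ℕ) : pSum (v - w) i = pSum v i - pSum w i := by
  simp [pSum, Finset.sum_sub_distrib]

theorem pSum_ext {r : ℕ} {v w : GP r} (h : ∀ i ≤ r, pSum v i = pSum w i) : v = w := by
  ext ⟨i, hi⟩
  have h1 := h i hi.le
  have h2 := h (i + 1) hi
  rw [pSum_succ _ _ hi, pSum_succ _ _ hi] at h2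
  omega

theorem pSum_revNeg {r : ℕ} (x : GP r) (k : ℕ) (hk : k ≤ r) :
    pSum (revNeg x) (r - k) = pSum x k - ∑ j, x j := by
  unfold pSum revNeg
  rw [Finset.sum_filter, Finset.sum_filter, ← Finset.sum_sub_distrib]
  rw [← Equiv.sum_comp Fin.revPerm]
  apply Finset.sum_congr rfl
  intro j _
  simp only [Fin.revPerm_apply, Fin.rev_rev, Fin.val_rev]
  have := j.2
  split_ifs <;> first | omega | ring

/-- The constant vector. -/
def cC (r : ℕ) (m : ℤ) : GP r := fun _ => m

theorem pSum_cC {r : ℕ} (m : ℤ) (k : ℕ) (hk : k ≤ r) : pSum (cC r m) k = k * m := by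
  induction k with
  | zero => simp [pSum]
  | succ k ih => rw [pSum_succ _ _ hk, ih (by omega)]; simp [cC]; ring

theorem Tri.EE {r t : ℕ} {G : ℕ → ℕ → GP r} (h : Tri t G) (m : ℤ) (hm : G 0 t = cC r m)
    (u : ℕ) (hu : u ≤ t) : G u t = cC r m + FT.revNeg (G 0 u) := by
  have s1 := h.T1 u hu 0 (by omega)
  have s2 := h.revNeg.T1 u hu 0 (by omega)
  simp only [Nat.sub_zero, pSum_zero] at s1 s2
  have f : ∀ v : GP r, ∑ j, FT.revNeg v j = - ∑ j, v j := by
    intro v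
    have := pSum_revNeg v 0 (by omega)
    rw [pSum_zero, Nat.sub_zero, pSum_full] at this
    rw [this]; ring
  rw [pSum_full] at s1 s2
  rw [f, f, f] at s2
  have fm : ∑ j, G 0 t j = r * m := by rw [hm, ← pSum_full, pSum_cC _ _ le_rfl]
  apply pSum_ext
  intro i hi
  obtain ⟨k, hk, rfl⟩ : ∃ k, k ≤ r ∧ i = r - k := ⟨r - i, by omega, by omega⟩
  rw [pSum_add, pSum_revNeg _ _ hk, pSum_cC _ _ (by omega)]
  have a := h.T1 u hu k hk
  have b := h.refl.T1 (t - u) (by omega) (r - k) (by omega)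
  simp only [Nat.sub_zero, Nat.sub_self, show t - (t - u) = u by omega,
    show r - (r - k) = k by omega] at b
  rw [fm] at a b s1 s2
  rw [hm, pSum_cC _ _ (by omega)] at a b
  push_cast [Nat.cast_sub hk] at a b ⊢
  apply le_antisymm
  · linarith
  · linarith

/-- Promoted row, defined recursively. -/
def row {r : ℕ} (S : ℕ → GP r) : ℕ → GP r
  | 0 => S 0
  | k + 1 => sortDesc (row S k + S (k + 2) - S (k + 1))

theorem bkseg_eq {r : ℕ} (S : ℕ → GP r) (m k : ℕ) :
    BKseg 1 m S k = if k ≤ m then row S k else S k := by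
  induction m generalizing k with
  | zero =>
    simp only [BKseg, id]
    split_ifs with h
    · have : k = 0 := by omega
      subst this; rfl
    · rfl
  | succ m ih =>
    show BK (1 + m) (BKseg 1 m S) k = _
    unfold BK
    by_cases hk : k = 1 + m
    · rw [if_pos hk, if_pos (by omega), ih, ih, ih, if_neg (by omega), if_pos (by omega),
        if_neg (by omega), hk]
      rw [show 1 + m = m + 1 by omega]
      simp only [row, Nat.add_sub_cancel]
      rw [add_comm (S (m + 1 + 1))]
    · rw [if_neg hk, ih]
      by_cases h : k ≤ m
      · rw [if_pos h, if_pos (by omega)]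
      · rw [if_neg h, if_neg (by omega)]

theorem promo_lt {r : ℕ} (t : ℕ) (S : ℕ → GP r) (k : ℕ) (hk : k < t) :
    promo t S k = row S k := by
  unfold promo; rw [bkseg_eq, if_pos (by omega)]

theorem promo_ge {r : ℕ} (t : ℕ) (S : ℕ → GP r) (k : ℕ) (ht : 1 ≤ t) (hk : t ≤ k) :
    promo t S k = S k := by
  unfold promo; rw [bkseg_eq, if_neg (by omega)]

theorem promo_zero {r : ℕ} (t : ℕ) (S : ℕ → GP r) : promo t S 0 = S 0 := by
  unfold promo; rw [bkseg_eq, if_pos (by omega)]; rfl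

theorem row_congr {r : ℕ} (S S' : ℕ → GP r) (t : ℕ) (h : ∀ k ≤ t, S k = S' k) (k : ℕ)
    (hk : k < t) : row S k = row S' k := by
  induction k with
  | zero => exact h 0 (by omega)
  | succ k ih =>
    simp only [row]
    rw [ih (by omega), h (k + 2) (by omega), h (k + 1) (by omega)]

theorem promo_congr {r : ℕ} (S S' : ℕ → GP r) (t : ℕ) (h : ∀ k ≤ t, S k = S' k) (k : ℕ)
    (hk : k ≤ t) : promo t S k = promo t S' k := by
  rcases Nat.lt_or_ge k t with h1 | h1
  · rw [promo_lt _ _ _ h1, promo_lt _ _ _ h1, row_congr S S' t h k h1]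
  · rcases Nat.eq_zero_or_pos t with h0 | h0
    · have : k = 0 := by omega
      subst this
      rw [promo_zero, promo_zero, h 0 (by omega)]
    · rw [promo_ge _ _ _ h0 h1, promo_ge _ _ _ h0 h1, h k hk]

theorem PE_zero {r : ℕ} (t : ℕ) (S : ℕ → GP r) : PE t S 0 = S := rfl

theorem PE_succ {r : ℕ} (t : ℕ) (S : ℕ → GP r) (u : ℕ) :
    PE t S (u + 1) = promo t (PE t S u) := by
  unfold PE; rw [Function.iterate_succ_apply']

theorem PE_congr {r : ℕ} (S S' : ℕ → GP r) (t : ℕ) (h : ∀ k ≤ t, S k = S' k) (u k : ℕ)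
    (hk : k ≤ t) : PE t S u k = PE t S' u k := by
  induction u generalizing k with
  | zero => exact h k hk
  | succ u ih =>
    rw [PE_succ, PE_succ]
    exact promo_congr _ _ t ih k hk

theorem PE_add {r : ℕ} (S : ℕ → GP r) (t u w : ℕ) :
    PE t (PE t S u) w = PE t S (u + w) := by
  unfold PE; rw [← Function.iterate_add_apply, add_comm]

/-- Oscillating tableau. -/
structure RowOK {r : ℕ} (t : ℕ) (S : ℕ → GP r) : Prop where
  zero : S 0 = 0
  anti : ∀ k ≤ t, Antitone (S k)
  step : ∀ k < t, Step1 (S k) (S (k + 1))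

theorem cell_vstep {r : ℕ} {κ lam μ ν : GP r} (h : CellP κ lam μ ν ∨ CellM κ lam μ ν) :
    Step1 μ ν := by
  rcases h with ⟨a, b, _, _, _, h⟩ | ⟨a, b, _, _, _, h⟩
  · exact ⟨b, Or.inl h⟩
  · exact ⟨b, Or.inr h⟩

theorem row_ok {r t : ℕ} {S : ℕ → GP r} (h : RowOK t S) (k : ℕ) (hk : k < t) :
    Antitone (row S k) ∧ Step1 (row S k) (S (k + 1)) := by
  induction k with
  | zero =>
    refine ⟨h.anti 0 (by omega), h.step 0 hk⟩
  | succ k ih =>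
    obtain ⟨h1, h2⟩ := ih (by omega)
    refine ⟨sortDesc_antitone _, ?_⟩
    exact cell_vstep (cell_of h1 (h.anti (k + 1) (by omega)) (h.anti (k + 2) (by omega)) h2
      (h.step (k + 1) (by omega))).2.1

theorem row_cell {r t : ℕ} {S : ℕ → GP r} (h : RowOK t S) (k : ℕ) (hk : k + 1 < t) :
    Step1 (row S k) (row S (k + 1)) ∧
      S (k + 1) = sortDesc (row S k + S (k + 2) - row S (k + 1)) := by
  obtain ⟨h1, h2⟩ := row_ok h k (by omega)
  obtain ⟨q1, q2, q3⟩ := cell_of h1 (h.anti (k + 1) (by omega)) (h.anti (k + 2) (by omega)) h2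
      (h.step (k + 1) (by omega))
  exact ⟨q1, q3⟩

theorem promo_ok {r t : ℕ} (ht : 1 ≤ t) {S : ℕ → GP r} (h : RowOK t S) : RowOK t (promo t S) where
  zero := by rw [promo_zero, h.zero]
  anti k hk := by
    rcases Nat.lt_or_ge k t with h1 | h1
    · rw [promo_lt _ _ _ h1]; exact (row_ok h k h1).1
    · rw [promo_ge _ _ _ ht h1]; exact h.anti k hk
  step k hk := by
    rw [promo_lt _ _ _ hk]
    rcases Nat.lt_or_ge (k + 1) t with h1 | h1
    · rw [promo_lt _ _ _ h1]; exact (row_cell h k h1).1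
    · rw [promo_ge _ _ _ ht h1]; exact (row_ok h k hk).2

theorem PE_ok {r t : ℕ} (ht : 1 ≤ t) {S : ℕ → GP r} (h : RowOK t S) (u : ℕ) :
    RowOK t (PE t S u) := by
  induction u with
  | zero => exact h
  | succ u ih => rw [PE_succ]; exact promo_ok ht ih

theorem PE_last {r t : ℕ} (ht : 1 ≤ t) (S : ℕ → GP r) (u : ℕ) : PE t S u t = S t := by
  induction u with
  | zero => rfl
  | succ u ih => rw [PE_succ, promo_ge _ _ _ ht le_rfl, ih]

theorem PE_rule {r t : ℕ} (S : ℕ → GP r) (u k : ℕ) (hk : k + 1 < t) :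
    PE t S (u + 1) (k + 1) =
      sortDesc (PE t S (u + 1) k + PE t S u (k + 2) - PE t S u (k + 1)) := by
  rw [PE_succ, promo_lt _ _ _ hk, promo_lt _ _ _ (by omega)]; rfl

theorem PE_rule' {r t : ℕ} (ht : 1 ≤ t) {S : ℕ → GP r} (h : RowOK t S) (u k : ℕ)
    (hk : k + 1 < t) :
    PE t S u (k + 1) =
      sortDesc (PE t S (u + 1) k + PE t S u (k + 2) - PE t S (u + 1) (k + 1)) := by
  rw [PE_succ, promo_lt _ _ _ hk, promo_lt _ _ _ (by omega)]
  exact (row_cell (PE_ok ht h u) k hk).2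

theorem PE_vstep {r t : ℕ} (ht : 1 ≤ t) {S : ℕ → GP r} (h : RowOK t S) (u k : ℕ)
    (hk : k < t) : Step1 (PE t S (u + 1) k) (PE t S u (k + 1)) := by
  rw [PE_succ, promo_lt _ _ _ hk]
  exact (row_ok (PE_ok ht h u) k hk).2

theorem PE_tri {r t : ℕ} (ht : 1 ≤ t) {S : ℕ → GP r} (h : RowOK t S) (U : ℕ) :
    Tri t (fun j v => PE t S (U + j) (v - j)) where
  diag j _ := by rw [Nat.sub_self]; exact (PE_ok ht h _).zero
  anti j v _ _ := (PE_ok ht h _).anti _ (by omega)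
  hstep j v h1 h2 := by
    have := (PE_ok ht h (U + j)).step (v - j) (by omega)
    rwa [show v - j + 1 = v + 1 - j by omega] at this
  vstep j v h1 h2 := by
    have := PE_vstep ht h (U + j) (v - (j + 1)) (by omega)
    rwa [show v - (j + 1) + 1 = v - j by omega] at this
  rule j v h1 h2 := by
    rw [show v + 1 - (j + 1) = v - j by omega]
    have := PE_rule S (U + j) (v - (j + 1)) (t := t) (by omega)
    rwa [show v - (j + 1) + 1 = v - j by omega, show v - (j + 1) + 2 = v + 1 - j by omega] at this
  rule' j v h1 h2 := by
    rw [show v + 1 - (j + 1) = v - j by omega]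
    have := PE_rule' ht h (U + j) (v - (j + 1)) (by omega)
    rwa [show v - (j + 1) + 1 = v - j by omega, show v - (j + 1) + 2 = v + 1 - j by omega] at this

theorem PE_H {r t : ℕ} (ht : 1 ≤ t) {S : ℕ → GP r} (h : RowOK t S) (m : ℤ) (hm : S t = cC r m)
    (U u : ℕ) (hu : u ≤ t) : PE t S (U + u) (t - u) = cC r m + revNeg (PE t S U u) := by
  have := (PE_tri ht h U).EE m (by simp only [Nat.sub_zero]; rw [PE_last ht, hm]) u hu
  simpa using this

theorem revNeg_cC {r : ℕ} (m : ℤ) : revNeg (cC r m) = - cC r m := by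
  ext i; simp [revNeg, cC]

theorem PE_per {r t : ℕ} (ht : 1 ≤ t) {S : ℕ → GP r} (h : RowOK t S) (m : ℤ) (hm : S t = cC r m)
    (U u : ℕ) (hu : u ≤ t) : PE t S (U + t) u = PE t S U u := by
  have := PE_H ht h m hm (U + u) (t - u) (by omega)
  rw [PE_H ht h m hm U u hu, show U + u + (t - u) = U + t by omega,
    show t - (t - u) = u by omega, revNeg_add, revNeg_cC, revNeg_revNeg] at this
  rw [this]; abel

theorem PE_cell {r t : ℕ} (ht : 1 ≤ t) {S : ℕ → GP r} (h : RowOK t S) (u k : ℕ)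
    (hk : k + 1 < t) :
    CellP (PE t S (u + 1) k) (PE t S u (k + 1)) (PE t S (u + 1) (k + 1)) (PE t S u (k + 2)) ∨
    CellM (PE t S (u + 1) k) (PE t S u (k + 1)) (PE t S (u + 1) (k + 1)) (PE t S u (k + 2)) := by
  rw [PE_rule S u k hk]
  exact (cell_of ((PE_ok ht h _).anti _ (by omega)) ((PE_ok ht h _).anti _ (by omega))
    ((PE_ok ht h _).anti _ (by omega)) (PE_vstep ht h u k (by omega))
    ((PE_ok ht h _).step _ (by omega))).2.1

theorem pSum_eV {r : ℕ} (a : Fin r) (i : ℕ) : pSum (eV a) i = if (a : ℕ) < i then 1 else 0 := by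
  unfold pSum eV
  rw [Finset.sum_filter]
  rw [Finset.sum_eq_single a]
  · simp
  · intro b _ hb; simp [hb]
  · simp

theorem pSum_z {r : ℕ} (i : ℕ) : pSum (0 : GP r) i = 0 := by simp [pSum]

/-- The cell statistic. -/
def QQ {r : ℕ} (t : ℕ) (S : ℕ → GP r) (i u k : ℕ) : ℤ :=
  (pSum (PE t S u (k + 1)) i - pSum (PE t S (u + 1) k) i) -
    (pSum (PE t S u (k + 2)) i - pSum (PE t S (u + 1) (k + 1)) i)

theorem QQ_spec {r t : ℕ} (ht : 1 ≤ t) {S : ℕ → GP r} (h : RowOK t S) (i u k : ℕ)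
    (hk : k + 1 < t) :
    (QQ t S i u k = 0 ∨ QQ t S i u k = 1) ∧
    (recorded r t S i (u + 1) (u + k + 2) ↔ QQ t S i u k = 1) ∧ (r ≤ i → QQ t S i u k = 0) := by
  have hc := PE_cell ht h u k hk
  unfold QQ recorded
  rw [show u + k + 2 - (u + 1) = k + 1 by omega, Nat.add_sub_cancel, Nat.add_sub_cancel,
    show k + 1 + 1 = k + 2 by omega]
  generalize PE t S u (k + 1) = lam at *
  generalize PE t S (u + 1) k = κ at *
  generalize PE t S u (k + 2) = ν at *
  generalize PE t S (u + 1) (k + 1) = μ at *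
  rcases hc with ⟨a, b, hab, -, e1, e2⟩ | ⟨a, b, hab, -, e1, e2⟩
  · have f : pSum lam i - pSum κ i - (pSum ν i - pSum μ i) =
        (if (a : ℕ) < i then 1 else 0) - (if (b : ℕ) < i then 1 else 0) := by
      rw [e1, e2, pSum_add, pSum_add, pSum_eV, pSum_eV]; ring
    rw [f]
    rw [Fin.le_def] at hab
    refine ⟨by split_ifs <;> omega, ?_, fun hi => by have := a.2; have := b.2; split_ifs <;> omega⟩
    constructor
    · rintro ⟨a', b', ⟨g1, g2, g3, g4⟩ | ⟨g1, g2, g3, g4⟩⟩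
      · have := eV_inj (add_left_cancel (e1.symm.trans g1))
        have := eV_inj (add_left_cancel (e2.symm.trans g2))
        subst_vars
        rw [if_pos g3, if_neg (by omega)]; rfl
      · exact (eV_ne_neg e1 g1).elim
    · intro hq
      refine ⟨a, b, Or.inl ⟨e1, e2, ?_⟩⟩
      split_ifs at hq <;> omega
  · have f : pSum lam i - pSum κ i - (pSum ν i - pSum μ i) =
        (if (b : ℕ) < i then 1 else 0) - (if (a : ℕ) < i then 1 else 0) := by
      rw [e1, e2, pSum_add, pSum_add, pSum_eV, pSum_eV]; ring
    rw [f]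
    rw [Fin.le_def] at hab
    refine ⟨by split_ifs <;> omega, ?_, fun hi => by have := a.2; have := b.2; split_ifs <;> omega⟩
    constructor
    · rintro ⟨a', b', ⟨g1, g2, g3, g4⟩ | ⟨g1, g2, g3, g4⟩⟩
      · exact (eV_ne_neg g1 e1).elim
      · have := eV_inj (add_left_cancel (e1.symm.trans g1))
        have := eV_inj (add_left_cancel (e2.symm.trans g2))
        subst_vars
        rw [if_pos g3, if_neg (by omega)]; rfl
    · intro hq
      refine ⟨a, b, Or.inr ⟨e1, e2, ?_⟩⟩
      split_ifs at hq <;> omega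

theorem QQ_dual {r t : ℕ} (ht : 1 ≤ t) {S : ℕ → GP r} (h : RowOK t S) (m : ℤ)
    (hm : S t = cC r m) (i u k : ℕ) (hi : i ≤ r) (hk : k + 1 < t) :
    QQ t S (r - i) (u + k + 1) (t - k - 2) = QQ t S i u k := by
  have h0 := (QQ_spec ht h r u k hk).2.2 le_rfl
  unfold QQ at *
  have e1 := PE_H ht h m hm u (k + 2) (by omega)
  have e2 := PE_H ht h m hm u (k + 1) (by omega)
  have e3 := PE_H ht h m hm (u + 1) (k + 1) (by omega)
  have e4 := PE_H ht h m hm (u + 1) k (by omega)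
  rw [show t - k - 2 + 1 = t - (k + 1) by omega, show t - k - 2 + 2 = t - k by omega,
    show t - k - 2 = t - (k + 2) by omega, show u + k + 1 + 1 = u + (k + 2) by omega, e1,
    show u + k + 1 = u + (k + 1) by omega, e2, show u + (k + 2) = u + 1 + (k + 1) by omega, e3,
    show u + (k + 1) = u + 1 + k by omega, e4]
  simp only [pSum_add, pSum_revNeg _ _ hi]
  simp only [pSum_full] at h0
  linarith

theorem rec_dual {r t : ℕ} (ht : 1 ≤ t) {S : ℕ → GP r} (h : RowOK t S) (m : ℤ)
    (hm : S t = cC r m) (i u v : ℕ) (hi : i ≤ r) (hu : 1 ≤ u) (huv : u < v) (hvt : v < u + t) :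
    recorded r t S i u v ↔ recorded r t S (r - i) v (u + t) := by
  obtain ⟨u, rfl⟩ : ∃ u', u = u' + 1 := ⟨u - 1, by omega⟩
  obtain ⟨k, rfl⟩ : ∃ k, v = u + k + 2 := ⟨v - u - 2, by omega⟩
  rw [(QQ_spec ht h i u k (by omega)).2.1]
  have := (QQ_spec ht h (r - i) (u + k + 1) (t - k - 2) (by omega)).2.1
  rw [show u + k + 1 + 1 = u + k + 2 by omega,
    show u + k + 1 + (t - k - 2) + 2 = u + 1 + t by omega] at this
  rw [this, QQ_dual ht h m hm i u k hi (by omega)]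

theorem rec_per {r t : ℕ} (ht : 1 ≤ t) {S : ℕ → GP r} (h : RowOK t S) (m : ℤ)
    (hm : S t = cC r m) (i u v : ℕ) (hu : 1 ≤ u) (huv : u < v) (hvt : v < u + t) :
    recorded r t S i (u + t) (v + t) ↔ recorded r t S i u v := by
  unfold recorded
  rw [show u + t - 1 = u - 1 + t by omega, show v + t - (u + t) = v - u by omega]
  rw [PE_per ht h m hm _ _ (by omega), PE_per ht h m hm _ _ (by omega),
    PE_per ht h m hm _ _ (by omega), PE_per ht h m hm _ _ (by omega)]

theorem first_col {r : ℕ} {α : GP r} (ha : Antitone α) (h : Step1 0 α) (i : ℕ) (h1 : 1 ≤ i)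
    (h2 : i < r) : pSum α i + pSum α (r - i) - ∑ j, α j = 1 := by
  obtain ⟨x, hx | hx⟩ := h
  · rw [zero_add] at hx
    have hx0 : (x : ℕ) = 0 := by
      by_contra hne
      have := ha (show (⟨0, by omega⟩ : Fin r) ≤ x by rw [Fin.le_def]; simp)
      rw [hx, eV_same, eV_ne (by rw [Ne, Fin.ext_iff]; simp; omega)] at this
      omega
    rw [← pSum_full, hx, pSum_eV, pSum_eV, pSum_eV, if_pos (by omega), if_pos (by omega),
      if_pos (by omega)]
    rfl
  · have hx' : α = 0 - eV x := by rw [hx]; abel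
    have hx0 : (x : ℕ) = r - 1 := by
      by_contra hne
      have := ha (show x ≤ (⟨r - 1, by omega⟩ : Fin r) by rw [Fin.le_def]; simp; omega)
      rw [hx'] at this
      simp only [Pi.sub_apply, Pi.zero_apply] at this
      rw [eV_same, eV_ne (by rw [Ne, Fin.ext_iff]; simp; omega)] at this
      omega
    rw [← pSum_full, hx']
    simp only [pSum_sub, pSum_z]
    rw [pSum_eV, pSum_eV, pSum_eV, if_neg (by omega), if_neg (by omega),
      if_pos (by omega)]
    rfl

theorem row_exu {r t : ℕ} (ht : 1 ≤ t) {S : ℕ → GP r} (h : RowOK t S) (m : ℤ)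
    (hm : S t = cC r m) (i u : ℕ) (h1 : 1 ≤ i) (h2 : i < r) :
    ∃ k, (k + 1 < t ∧ QQ t S i u k = 1) ∧ ∀ k', k' + 1 < t → QQ t S i u k' = 1 → k' = k := by
  have hs : ∑ k ∈ Finset.range (t - 1), QQ t S i u k = 1 := by
    have tel := Finset.sum_range_sub'
      (fun k => pSum (PE t S u (k + 1)) i - pSum (PE t S (u + 1) k) i) (t - 1)
    have : ∑ k ∈ Finset.range (t - 1), QQ t S i u k = _ := tel
    rw [this]
    have e := PE_H ht h m hm u 1 ht
    have e0 : PE t S (u + 1) 0 = 0 := (PE_ok ht h _).zero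
    simp only [show t - 1 + 1 = t by omega]
    rw [PE_last ht, hm, e, e0, zero_add]
    have hr := pSum_revNeg (PE t S u 1) (r - i) (by omega)
    rw [show r - (r - i) = i by omega] at hr
    have st := (PE_ok ht h u).step 0 (by omega)
    rw [(PE_ok ht h u).zero] at st
    have := first_col ((PE_ok ht h u).anti 1 ht) st i h1 h2
    rw [pSum_add, hr, pSum_z]
    linarith
  have h01 : ∀ k ∈ Finset.range (t - 1), 0 ≤ QQ t S i u k := by
    intro k hk
    rw [Finset.mem_range] at hk
    have := (QQ_spec ht h i u k (by omega)).1
    omega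
  have ex : ∃ k ∈ Finset.range (t - 1), QQ t S i u k ≠ 0 := by
    by_contra hcon
    push Not at hcon
    rw [Finset.sum_eq_zero hcon] at hs
    omega
  obtain ⟨k, hk, hne⟩ := ex
  have hk1 : QQ t S i u k = 1 := by
    rw [Finset.mem_range] at hk
    have := (QQ_spec ht h i u k (by omega)).1
    omega
  refine ⟨k, ⟨by rw [Finset.mem_range] at hk; omega, hk1⟩, ?_⟩
  intro k' hk' hq
  by_contra hkk
  have hmem : k' ∈ (Finset.range (t - 1)).erase k := by
    rw [Finset.mem_erase, Finset.mem_range]; exact ⟨hkk, by omega⟩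
  rw [← Finset.add_sum_erase _ _ hk] at hs
  have := Finset.single_le_sum (f := QQ t S i u) (fun j hj => h01 j (Finset.mem_of_mem_erase hj)) hmem
  omega

theorem PM_exu {r t n : ℕ} (ht : 1 ≤ t) {T : ℕ → GP r} (h : RowOK t (stdT n T)) (m : ℤ)
    (hm : stdT n T t = cC r m) (i u : ℕ) (h1 : 1 ≤ i) (h2 : i < r) (hu : 1 ≤ u) (hut : u ≤ t) :
    ∃ v, PMmem r n t T i u v ∧ ∀ v', PMmem r n t T i u v' → v' = v := by
  obtain ⟨k, ⟨hk, hq⟩, huq⟩ := row_exu ht h m hm i (u - 1) h1 h2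
  have hrec := (QQ_spec ht h i (u - 1) k hk).2.1.2 hq
  rw [show u - 1 + 1 = u by omega, show u - 1 + k + 2 = u + k + 1 by omega] at hrec
  refine ⟨if u + k + 1 ≤ t then u + k + 1 else u + k + 1 - t, ?_, ?_⟩
  · unfold PMmem
    split_ifs with ha hb hb
    · exact ⟨by omega, by omega, by omega, by omega, by omega, by omega, by omega, hrec⟩
    · omega
    · omega
    · refine ⟨by omega, by omega, by omega, by omega, by omega, by omega, by omega, ?_⟩
      rwa [show u + k + 1 - t + t = u + k + 1 by omega]
  · rintro v' ⟨_, _, g1, g2, g3, _, _, g4⟩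
    have key : ∀ w, u < w → w < u + t → recorded r t (stdT n T) i u w → w = u + k + 1 := by
      intro w w1 w2 hw
      have := (QQ_spec ht h i (u - 1) (w - u - 1) (by omega)).2.1
      rw [show u - 1 + 1 = u by omega, show u - 1 + (w - u - 1) + 2 = w by omega] at this
      have := huq _ (by omega) (this.1 hw)
      omega
    split_ifs at g4 with hb
    · have := key v' hb (by omega) g4
      rw [if_pos (by omega)]; exact this
    · have := key (v' + t) (by omega) (by omega) g4
      rw [if_neg (by omega)]; omega

theorem PM_dual {r t n : ℕ} (ht : 1 ≤ t) {T : ℕ → GP r} (h : RowOK t (stdT n T)) (m : ℤ)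
    (hm : stdT n T t = cC r m) (i u v : ℕ) (h1 : 1 ≤ i) (h2 : i < r) :
    PMmem r n t T i u v ↔ PMmem r n t T (r - i) v u := by
  have main : 1 ≤ u → u ≤ t → 1 ≤ v → v ≤ t → u ≠ v →
      (recorded r t (stdT n T) i u (if u < v then v else v + t) ↔
      recorded r t (stdT n T) (r - i) v (if v < u then u else u + t)) := by
    intro a1 a2 a3 a4 a5
    split_ifs with b1 b2 b2
    · omega
    · exact rec_dual ht h m hm i u v h2.le a1 b1 (by omega)
    · rw [rec_dual ht h m hm i u (v + t) h2.le a1 (by omega) (by omega)]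
      exact rec_per ht h m hm _ v u a3 b2 (by omega)
    · omega
  unfold PMmem
  constructor
  · rintro ⟨a1, a2, a3, a4, a5, a6, a7, a8⟩
    exact ⟨a3, a4, a1, a2, a5.symm, by omega, by omega, (main a1 a2 a3 a4 a5).1 a8⟩
  · rintro ⟨a1, a2, a3, a4, a5, a6, a7, a8⟩
    exact ⟨a3, a4, a1, a2, a5.symm, by omega, by omega, (main a3 a4 a1 a2 a5.symm).2 a8⟩

theorem prom_dual {r t n : ℕ} (ht : 1 ≤ t) {T : ℕ → GP r} (h : RowOK t (stdT n T)) (m : ℤ)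
    (hm : stdT n T t = cC r m) (i : ℕ) (hi : i ≤ r) (u v : ℕ) :
    promRel r n t T i u v ↔ promRel r n t T (r - i) v u := by
  unfold promRel
  by_cases h0 : i = 0 ∨ i = r
  · rw [if_pos h0, if_pos (by omega)]; omega
  · rw [if_neg h0, if_neg (by omega)]
    exact PM_dual ht h m hm i u v (by omega) (by omega)

theorem prom_exu {r t n : ℕ} (ht : 1 ≤ t) {T : ℕ → GP r} (h : RowOK t (stdT n T)) (m : ℤ)
    (hm : stdT n T t = cC r m) (i : ℕ) (hi : i ≤ r) (u : Fin t) :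
    ∃ v : Fin t, promRel r n t T i (u + 1) (v + 1) ∧
      ∀ v' : Fin t, promRel r n t T i (u + 1) (v' + 1) → v' = v := by
  have := u.2
  unfold promRel
  by_cases h0 : i = 0 ∨ i = r
  · simp only [if_pos h0]
    refine ⟨u, by omega, fun v' hv => ?_⟩
    rw [Fin.ext_iff]; omega
  · simp only [if_neg h0]
    obtain ⟨v, hv, huq⟩ := PM_exu ht h m hm i (u + 1) (by omega) (by omega) (by omega) (by omega)
    have b := hv
    obtain ⟨_, _, b1, b2, _⟩ := b
    refine ⟨⟨v - 1, by omega⟩, ?_, ?_⟩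
    · simpa [show v - 1 + 1 = v by omega] using hv
    · intro v' hv'
      have := huq _ hv'
      rw [Fin.ext_iff]; simp; omega

theorem prom_perm {r t n : ℕ} (ht : 1 ≤ t) {T : ℕ → GP r} (h : RowOK t (stdT n T)) (m : ℤ)
    (hm : stdT n T t = cC r m) (i : ℕ) (hi : i ≤ r) :
    ∃ π : Equiv.Perm (Fin t), ∀ u v : Fin t,
          promRel r n t T i ((u : ℕ) + 1) ((v : ℕ) + 1) ↔ π u = v := by
  choose f hf1 hf2 using prom_exu ht h m hm i hi
  choose g hg1 hg2 using prom_exu ht h m hm (r - i) (by omega)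
  refine ⟨⟨f, g, ?_, ?_⟩, ?_⟩
  · intro u
    exact (hg2 _ _ ((prom_dual ht h m hm i hi _ _).1 (hf1 u))).symm
  · intro u
    exact (hf2 _ _ ((prom_dual ht h m hm i hi _ _).2 (hg1 u))).symm
  · intro u v
    exact ⟨fun hh => (hf2 _ _ hh).symm, fun hh => by rw [← hh]; exact hf1 u⟩

/-- Paths adding boxes in strictly increasing rows. -/
def StdP {r : ℕ} (d : ℕ) (f : ℕ → GP r) : Prop :=
  ∃ x : ℕ → Fin r, (∀ q q', q < q' → q' < d → x q < x q') ∧ ∀ q < d, f (q + 1) = f q + eV (x q)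

/-- Oscillizations of skew columns. -/
def Std {r : ℕ} (d : ℕ) (f : ℕ → GP r) : Prop :=
  StdP d f ∨ StdP d (fun q => revNeg (f q))

theorem StdP.congr {r d : ℕ} {f g : ℕ → GP r} (h : StdP d f) (hfg : ∀ q ≤ d, f q = g q) :
    StdP d g := by
  obtain ⟨x, h1, h2⟩ := h
  refine ⟨x, h1, fun q hq => ?_⟩
  rw [← hfg _ hq, ← hfg _ hq.le, h2 q hq]

theorem Std.congr {r d : ℕ} {f g : ℕ → GP r} (h : Std d f) (hfg : ∀ q ≤ d, f q = g q) :
    Std d g := by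
  rcases h with h | h
  · exact Or.inl (h.congr hfg)
  · exact Or.inr (h.congr (fun q hq => by rw [hfg q hq]))

theorem Std.revNeg {r d : ℕ} {f : ℕ → GP r} (h : Std d f) : Std d (fun q => FT.revNeg (f q)) := by
  rcases h with h | h
  · right; simpa only [revNeg_revNeg] using h
  · exact Or.inl h

theorem StdP.addc {r d : ℕ} {f : ℕ → GP r} (h : StdP d f) (w : GP r) :
    StdP d (fun q => w + f q) := by
  obtain ⟨x, h1, h2⟩ := h
  refine ⟨x, h1, fun q hq => ?_⟩
  beta_reduce
  rw [h2 q hq, add_assoc]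

theorem Std.addc {r d : ℕ} {f : ℕ → GP r} (h : Std d f) (w : GP r) :
    Std d (fun q => w + f q) := by
  rcases h with h | h
  · exact Or.inl (h.addc w)
  · right
    simpa only [revNeg_add] using h.addc (FT.revNeg w)

theorem StdP.trev {r d : ℕ} {f : ℕ → GP r} (h : StdP d f) : StdP d (fun q => FT.revNeg (f (d - q))) := by
  obtain ⟨x, h1, h2⟩ := h
  refine ⟨fun q => (x (d - 1 - q)).rev, ?_, ?_⟩
  · intro q q' hq hq'
    rw [Fin.rev_lt_rev]
    exact h1 _ _ (by omega) (by omega)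
  · intro q hq
    have := h2 (d - 1 - q) (by omega)
    rw [show d - 1 - q + 1 = d - q by omega, show d - 1 - q = d - (q + 1) by omega] at this
    beta_reduce
    rw [this, revNeg_add, revNeg_eV, show d - 1 - q = d - (q + 1) by omega]; abel

theorem Std.trev {r d : ℕ} {f : ℕ → GP r} (h : Std d f) : Std d (fun q => f (d - q)) := by
  rcases h with h | h
  · exact Or.inr h.trev
  · left; simpa only [revNeg_revNeg] using h.trev

theorem StdP.lemR {r d : ℕ} {f g : ℕ → GP r} (h : StdP d f) (h0 : Antitone (g 0))
    (hg : ∀ q < d, g (q + 1) = sortDesc (g q + f (q + 1) - f q)) :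
    StdP d g ∧ ∀ q ≤ d, g q = sortDesc (g 0 + f q - f 0) := by
  obtain ⟨x, hx1, hx2⟩ := h
  have ga : ∀ q ≤ d, Antitone (g q) := by
    intro q hq
    cases q with
    | zero => exact h0
    | succ q => rw [hg q (by omega)]; exact sortDesc_antitone _
  have hg' : ∀ q < d, g (q + 1) = sortDesc (g q + eV (x q)) := by
    intro q hq
    rw [hg q hq, hx2 q hq]; congr 1; abel
  have hy : ∀ q, ∃ y, q < d → y ≤ x q ∧ g q y = g q (x q) ∧ g (q + 1) = g q + eV y := by
    intro q
    by_cases hq : q < d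
    · obtain ⟨y, e1, e2, e3, e4⟩ := sort_add_eV (ga q hq.le) (x q)
      exact ⟨y, fun _ => ⟨e1, e2, by rw [hg' q hq, e4]⟩⟩
    · exact ⟨x q, fun h => absurd h hq⟩
  choose y hy using hy
  refine ⟨⟨y, ?_, fun q hq => (hy q hq).2.2⟩, ?_⟩
  · have step : ∀ q, q + 1 < d → y q < y (q + 1) := by
      intro q hq
      obtain ⟨a1, a2, a3⟩ := hy q (by omega)
      obtain ⟨b1, b2, b3⟩ := hy (q + 1) hq
      have hxx := hx1 q (q + 1) (by omega) hq
      by_contra hcon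
      rw [not_lt] at hcon
      have c1 := ga (q + 1) (by omega) hcon
      have c2 := ga q (by omega) hxx.le
      have hne : x (q + 1) ≠ y q := (lt_of_le_of_lt a1 hxx).ne'
      rw [b2, a3] at c1
      simp only [Pi.add_apply, eV_same, eV_ne hne] at c1
      omega
    intro q q' hqq hq'
    induction q', hqq using Nat.le_induction with
    | base => exact step q hq'
    | succ q' hqq ih => exact (ih (by omega)).trans (step q' hq')
  · have hz : ∀ q, ∀ i : Fin r, q ≤ d → (∀ p < q, x p < i) → g q i = g 0 i ∧ f q i = f 0 i := by
      intro q
      induction q with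
      | zero => intro i _ _; exact ⟨rfl, rfl⟩
      | succ q ih =>
        intro i hq hp
        obtain ⟨e1, e2⟩ := ih i (by omega) (fun p hp' => hp p (by omega))
        obtain ⟨a1, a2, a3⟩ := hy q (by omega)
        have hlt := hp q (by omega)
        rw [a3, hx2 q (by omega)]
        simp only [Pi.add_apply, eV_ne (lt_of_le_of_lt a1 hlt).ne', eV_ne hlt.ne', e1, e2, add_zero,
          and_self]
    intro q
    induction q with
    | zero =>
      intro _
      rw [show g 0 + f 0 - f 0 = g 0 by abel, sortDesc_self h0]
    | succ q ih =>
      intro hq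
      have i1 := ih (by omega)
      rw [hg' q (by omega), hx2 q (by omega)]
      rw [show g 0 + (f q + eV (x q)) - f 0 = (g 0 + f q - f 0) + eV (x q) by abel]
      apply sortDesc_congr
      intro z
      obtain ⟨z1, z2⟩ := hz q (x q) (by omega) (fun p hp => hx1 p q hp (by omega))
      have ev : (g 0 + f q - f 0) (x q) = g q (x q) := by
        simp only [Pi.add_apply, Pi.sub_apply, z1, z2]; ring
      have ec : cnt (g q) z = cnt (g 0 + f q - f 0) z := by
        rw [i1, cnt_sortDesc]
      rw [cnt_add_eV, cnt_add_eV, ev, ec]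

theorem Std.lemR {r d : ℕ} {f g : ℕ → GP r} (h : Std d f) (h0 : Antitone (g 0))
    (hg : ∀ q < d, g (q + 1) = sortDesc (g q + f (q + 1) - f q)) :
    Std d g ∧ ∀ q ≤ d, g q = sortDesc (g 0 + f q - f 0) := by
  rcases h with h | h
  · obtain ⟨h1, h2⟩ := h.lemR h0 hg
    exact ⟨Or.inl h1, h2⟩
  · obtain ⟨h1, h2⟩ := StdP.lemR (g := fun q => FT.revNeg (g q)) h (revNeg_antitone h0) (by
      intro q hq
      simp only [← revNeg_add, ← revNeg_sub, sortDesc_revNeg]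
      rw [hg q hq])
    refine ⟨Or.inr h1, fun q hq => ?_⟩
    have := h2 q hq
    simp only [← revNeg_add, ← revNeg_sub, sortDesc_revNeg] at this
    exact revNeg_inj this

/-- A rectangular block of the growth diagram. -/
theorem gridL {r c d : ℕ} (a : ℕ → ℕ → GP r) (htop : Std d (fun q => a 0 q))
    (hleft : Std c (fun k => a k 0)) (ha1 : ∀ q ≤ d, Antitone (a 0 q)) (ha2 : Antitone (a c 0))
    (hr : ∀ k < c, ∀ q < d, a (k + 1) (q + 1) = sortDesc (a (k + 1) q + a k (q + 1) - a k q)) :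
    Std d (fun q => a c q) ∧ Std c (fun k => a k d) ∧
      a c d = sortDesc (a c 0 + a 0 d - a 0 0) := by
  have col : ∀ q ≤ d, Std c (fun k => a k q) := by
    intro q
    induction q with
    | zero => intro _; exact hleft
    | succ q ih =>
      intro hq
      refine ((ih (by omega)).lemR (g := fun k => a k (q + 1)) (ha1 _ hq) ?_).1
      intro k hk
      rw [hr k hk q (by omega)]; congr 1; abel
  have bot : ∀ q < d, a c (q + 1) = sortDesc (a c q + a 0 (q + 1) - a 0 q) := by
    intro q hq
    have := ((col q (by omega)).lemR (g := fun k => a k (q + 1)) (ha1 _ hq) (by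
      intro k hk
      rw [hr k hk q (by omega)]; congr 1; abel)).2 c le_rfl
    rw [this]; congr 1; abel
  obtain ⟨b1, b2⟩ := htop.lemR (g := fun q => a c q) ha2 bot
  exact ⟨b1, col d le_rfl, b2 d le_rfl⟩

theorem StdP.cnt0 {r d : ℕ} {f : ℕ → GP r} (h : StdP d f) (h0 : f 0 = 0) (q : ℕ) (hq : q ≤ d)
    (z : ℤ) : cnt (f q) z = cnt (0 : GP r) z + if z = 0 then q else 0 := by
  obtain ⟨x, hx1, hx2⟩ := h
  have hz : ∀ q, ∀ i : Fin r, q ≤ d → (∀ p < q, x p < i) → f q i = 0 := by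
    intro q
    induction q with
    | zero => intro i _ _; rw [h0]; rfl
    | succ q ih =>
      intro i hq hp
      rw [hx2 q (by omega), Pi.add_apply, ih i (by omega) (fun p hp' => hp p (by omega)),
        eV_ne (hp q (by omega)).ne']
      rfl
  induction q with
  | zero => rw [h0]; simp
  | succ q ih =>
    have e := hz q (x q) (by omega) (fun p hp => hx1 p q hp (by omega))
    rw [hx2 q (by omega), cnt_add_eV, ih (by omega), e]
    by_cases hz0 : z = 0
    · subst hz0; simp; ring
    · simp [hz0, Ne.symm hz0]

theorem StdP.corner {r d : ℕ} {f : ℕ → GP r} (h : StdP d f) (h0 : f 0 = 0) (q : ℕ)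
    (hq : q + 1 ≤ d) : sortDesc (f (q + 1) - f 1) = sortDesc (f q) := by
  apply sortDesc_congr
  intro z
  rw [h.cnt0 h0 q (by omega)]
  have h' : StdP (d - 1) (fun q => f (q + 1) - f 1) := by
    obtain ⟨x, hx1, hx2⟩ := h
    refine ⟨fun q => x (q + 1), fun q q' a b => hx1 _ _ (by omega) (by omega), ?_⟩
    intro q hq
    beta_reduce
    rw [hx2 (q + 1) (by omega)]; abel
  exact h'.cnt0 (by simp) q (by omega) z

theorem Std.corner {r d : ℕ} {f : ℕ → GP r} (h : Std d f) (h0 : f 0 = 0) (q : ℕ)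
    (hq : q + 1 ≤ d) : sortDesc (f (q + 1) - f 1) = sortDesc (f q) := by
  rcases h with h | h
  · exact h.corner h0 q hq
  · have := h.corner (by rw [h0, revNeg_zero]) q hq
    rw [← revNeg_sub, sortDesc_revNeg, sortDesc_revNeg] at this
    exact revNeg_inj this

theorem stdP_apply {r d : ℕ} {f : ℕ → GP r} {x : ℕ → Fin r}
    (hx1 : ∀ q q', q < q' → q' < d → x q < x q') (hx2 : ∀ q < d, f (q + 1) = f q + eV (x q))
    (q : ℕ) (hq : q ≤ d) (i : Fin r) :
    f q i = f 0 i + if ∃ p < q, x p = i then 1 else 0 := by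
  induction q with
  | zero => simp
  | succ q ih =>
    rw [hx2 q (by omega), Pi.add_apply, ih (by omega)]
    by_cases h : x q = i
    · subst h
      have h1 : ¬ ∃ p < q, x p = x q := by
        rintro ⟨p, hp, he⟩
        exact absurd he (hx1 p q hp (by omega)).ne
      have h2 : ∃ p < q + 1, x p = x q := ⟨q, by omega, rfl⟩
      rw [if_neg h1, if_pos h2, eV_same]; ring
    · have h1 : (∃ p < q + 1, x p = i) ↔ ∃ p < q, x p = i := by
        constructor
        · rintro ⟨p, hp, he⟩
          refine ⟨p, ?_, he⟩
          rcases Nat.lt_succ_iff_lt_or_eq.mp hp with h3 | h3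
          · exact h3
          · subst h3; exact absurd he h
        · rintro ⟨p, hp, he⟩; exact ⟨p, by omega, he⟩
      rw [eV_ne (Ne.symm h), add_zero]
      simp only [h1]

theorem StdP.osc {r d : ℕ} {f : ℕ → GP r} (h : StdP d f) :
    (Finset.univ.filter fun i : Fin r => f d i ≠ f 0 i).card = d ∧
      ∀ q ≤ d, oscStep (f 0) (f d) q = f q := by
  obtain ⟨x, hx1, hx2⟩ := h
  have hS : (Finset.univ.filter fun i : Fin r => f d i ≠ f 0 i) = (Finset.range d).image x := by
    ext i
    simp only [Finset.mem_filter, Finset.mem_univ, true_and, Finset.mem_image, Finset.mem_range]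
    rw [stdP_apply hx1 hx2 d le_rfl i]
    split_ifs with h1
    · simpa using h1
    · simpa using h1
  have inj : ∀ q ≤ d, Set.InjOn x (Finset.range q : Finset ℕ) := by
    intro q hq a ha b hb hab
    simp only [Finset.coe_range, Set.mem_Iio] at ha hb
    rcases lt_trichotomy a b with h1 | h1 | h1
    · exact absurd hab (hx1 a b h1 (by omega)).ne
    · exact h1
    · exact absurd hab.symm (hx1 b a h1 (by omega)).ne
  refine ⟨by rw [hS, Finset.card_image_of_injOn (inj d le_rfl), Finset.card_range], ?_⟩
  intro q hq
  ext i
  unfold oscStep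
  simp only
  rw [hS]
  rw [stdP_apply hx1 hx2 q hq i]
  by_cases hi : ∃ p < d, x p = i
  · obtain ⟨p, hp, rfl⟩ := hi
    have hfd : f d (x p) = f 0 (x p) + 1 := by
      rw [stdP_apply hx1 hx2 d le_rfl, if_pos ⟨p, hp, rfl⟩]
    have hmem : x p ∈ (Finset.range d).image x := Finset.mem_image_of_mem _ (by simpa using hp)
    have hcard : (((Finset.range d).image x).filter fun i' => i' ≤ x p).card = p + 1 := by
      have : (((Finset.range d).image x).filter fun i' => i' ≤ x p) =
          (Finset.range (p + 1)).image x := by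
        ext j
        simp only [Finset.mem_filter, Finset.mem_image, Finset.mem_range]
        constructor
        · rintro ⟨⟨a, ha, rfl⟩, hle⟩
          refine ⟨a, ?_, rfl⟩
          by_contra hc
          exact absurd (hx1 p a (by omega) ha) (not_lt.mpr hle)
        · rintro ⟨a, ha, rfl⟩
          refine ⟨⟨a, by omega, rfl⟩, ?_⟩
          rcases Nat.lt_succ_iff_lt_or_eq.mp ha with h3 | h3
          · exact (hx1 a p h3 hp).le
          · subst h3; exact le_rfl
      rw [this, Finset.card_image_of_injOn (inj (p + 1) hp), Finset.card_range]
    simp only [if_pos (show f 0 (x p) < f d (x p) by omega), hcard]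
    have e : (∃ p' < q, x p' = x p) ↔ p + 1 ≤ q := by
      constructor
      · rintro ⟨p', h1, h2⟩
        have := inj d le_rfl (by simp; omega) (by simpa using hp) h2
        omega
      · intro h1; exact ⟨p, h1, rfl⟩
    by_cases hpq : p + 1 ≤ q
    · rw [if_pos ⟨hmem, hpq⟩, if_pos (e.2 hpq), hfd]
    · rw [if_neg (fun h => hpq h.2), if_neg (fun h => hpq (e.1 h))]; ring
  · have hmem : i ∉ (Finset.range d).image x := by
      simpa [Finset.mem_image] using hi
    rw [if_neg (fun h => hmem h.1), if_neg]
    · ring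
    · rintro ⟨p, h1, h2⟩; exact hi ⟨p, by omega, h2⟩

theorem card_rev {r : ℕ} (p : Fin r → Prop) [DecidablePred p]
    [DecidablePred fun i : Fin r => p i.rev] :
    (Finset.univ.filter fun i : Fin r => p i.rev).card =
      (Finset.univ.filter fun i : Fin r => p i).card := by
  apply Finset.card_bij (fun (i : Fin r) _ => i.rev)
  · intro i hi; simpa using hi
  · intro a _ b _ h; exact Fin.rev_injective h
  · intro b hb; exact ⟨b.rev, by simpa using hb, by simp⟩

theorem oscStep_revNeg {r : ℕ} (μ lam : GP r) (q : ℕ) :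
    oscStep (revNeg μ) (revNeg lam) q = revNeg (oscStep μ lam q) := by
  ext i
  unfold oscStep revNeg
  simp only [Finset.filter_filter, Finset.mem_filter, Finset.mem_univ, true_and]
  by_cases hne : lam i.rev = μ i.rev
  · simp [hne]
  · have e1 : (Finset.univ.filter fun j : Fin r => -lam j.rev ≠ -μ j.rev ∧ j ≤ i).card =
        (Finset.univ.filter fun j : Fin r => lam j ≠ μ j ∧ i.rev ≤ j).card := by
      refine Eq.trans ?_ (card_rev (fun j => lam j ≠ μ j ∧ i.rev ≤ j))
      congr 1; ext j; simp [Fin.rev_le_rev]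
    have e2 : (Finset.univ.filter fun j : Fin r => -lam j.rev ≠ -μ j.rev ∧ i ≤ j).card =
        (Finset.univ.filter fun j : Fin r => lam j ≠ μ j ∧ j ≤ i.rev).card := by
      refine Eq.trans ?_ (card_rev (fun j => lam j ≠ μ j ∧ j ≤ i.rev))
      congr 1; ext j; simp [Fin.rev_le_rev]
    have e3 : (-lam i.rev ≠ -μ i.rev) ↔ (lam i.rev ≠ μ i.rev) := by simp
    rcases lt_or_gt_of_ne hne with hlt | hlt
    · simp only [if_pos (show -μ i.rev < -lam i.rev by omega),
        if_neg (show ¬ μ i.rev < lam i.rev by omega), e1, e3]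
      split_ifs <;> rfl
    · simp only [if_neg (show ¬ -μ i.rev < -lam i.rev by omega),
        if_pos (show μ i.rev < lam i.rev by omega), e2, e3]
      split_ifs <;> rfl

theorem Std.osc {r d : ℕ} {f : ℕ → GP r} (h : Std d f) :
    (Finset.univ.filter fun i : Fin r => f d i ≠ f 0 i).card = d ∧
      ∀ q ≤ d, oscStep (f 0) (f d) q = f q := by
  rcases h with h | h
  · exact h.osc
  · obtain ⟨h1, h2⟩ := h.osc
    constructor
    · refine Eq.trans ?_ h1
      refine Eq.trans (card_rev (fun i => f d i ≠ f 0 i)).symm ?_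
      congr 1; ext i; simp [FT.revNeg]
    · intro q hq
      have := h2 q hq
      rw [oscStep_revNeg] at this
      exact revNeg_inj this

/-- Partial sums of block sizes. -/
def CC (d : ℕ → ℕ) (j : ℕ) : ℕ := ∑ k ∈ Finset.range j, d k

theorem CC_succ (d : ℕ → ℕ) (j : ℕ) : CC d (j + 1) = CC d j + d j := Finset.sum_range_succ _ _

theorem CC_mono (d : ℕ → ℕ) {i j : ℕ} (h : i ≤ j) : CC d i ≤ CC d j := by
  induction j, h using Nat.le_induction with
  | base => exact le_rfl
  | succ j _ ih => rw [CC_succ]; omega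

/-- `f` is the concatenation of standard blocks, with `T` recording the breakpoints. -/
structure Blk {r : ℕ} (n : ℕ) (d : ℕ → ℕ) (f T : ℕ → GP r) : Prop where
  std : ∀ j < n, Std (d j) (fun q => f (CC d j + q))
  bp : ∀ j ≤ n, T j = f (CC d j)

theorem Blk.stepSize {r n : ℕ} {d : ℕ → ℕ} {f T : ℕ → GP r} (h : Blk n d f T) (j : ℕ)
    (hj : j < n) : stepSize T j = d j := by
  unfold FT.stepSize
  rw [h.bp j hj.le, h.bp (j + 1) hj, CC_succ]
  exact (h.std j hj).osc.1

theorem Blk.cum {r n : ℕ} {d : ℕ → ℕ} {f T : ℕ → GP r} (h : Blk n d f T) (j : ℕ)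
    (hj : j ≤ n) : cum T j = CC d j := by
  unfold FT.cum CC
  apply Finset.sum_congr rfl
  intro k hk
  rw [Finset.mem_range] at hk
  exact h.stepSize k (by omega)

theorem Blk.stdT {r n : ℕ} {d : ℕ → ℕ} {f T : ℕ → GP r} (h : Blk n d f T) (k : ℕ)
    (hk : k ≤ CC d n) : stdT n T k = f k := by
  have hidx : stdIdx n T k ≤ n ∧ FT.cum T (stdIdx n T k) ≤ k ∧
      ∀ j ≤ n, FT.cum T j ≤ k → j ≤ stdIdx n T k := by
    have hne : ((Finset.range (n + 1)).filter fun j => FT.cum T j ≤ k).Nonempty :=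
      ⟨0, Finset.mem_filter.mpr ⟨by simp, by simp [FT.cum]⟩⟩
    have hmem : stdIdx n T k ∈ ((Finset.range (n + 1)).filter fun j => FT.cum T j ≤ k) := by
      unfold stdIdx
      obtain ⟨j, hj, he⟩ := Finset.exists_mem_eq_sup _ hne (id : ℕ → ℕ)
      rw [he]; exact hj
    rw [Finset.mem_filter, Finset.mem_range] at hmem
    refine ⟨by omega, hmem.2, ?_⟩
    intro j hj hc
    unfold stdIdx
    exact Finset.le_sup (f := id) (by rw [Finset.mem_filter, Finset.mem_range]; exact ⟨by omega, hc⟩)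
  unfold FT.stdT
  generalize stdIdx n T k = J at hidx
  obtain ⟨h1, h2, h3⟩ := hidx
  rw [h.cum J h1] at h2
  split_ifs with hJ
  · subst hJ
    rw [h.bp J le_rfl, show CC d J = k by omega]
  · have hJn : J < n := by omega
    have h4 : ¬ (CC d (J + 1) ≤ k) := by
      intro hc
      have := h3 (J + 1) (by omega) (by rw [h.cum _ (by omega)]; exact hc)
      omega
    rw [CC_succ] at h4
    rw [h.bp J h1, h.bp (J + 1) (by omega), h.cum J h1, CC_succ]
    have := (h.std J hJn).osc.2 (k - CC d J) (by omega)
    rw [add_zero] at this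
    rw [this]; congr 1; omega

theorem Blk.congr {r n : ℕ} {d : ℕ → ℕ} {f g T : ℕ → GP r} (h : Blk n d f T)
    (hfg : ∀ k ≤ CC d n, f k = g k) : Blk n d g T where
  std j hj := (h.std j hj).congr (fun q hq => hfg _ (by
    have := CC_mono d (show j + 1 ≤ n from hj); rw [CC_succ] at this; omega))
  bp j hj := by rw [h.bp j hj, hfg _ (CC_mono d hj)]

theorem colP {r : ℕ} (hr : 0 < r) (S : Finset (Fin r)) (μ : GP r) (h1 : Antitone μ)
    (h2 : Antitone (μ + indV S)) :
    ∃ f : ℕ → GP r, StdP S.card f ∧ f 0 = μ ∧ f S.card = μ + indV S ∧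
      ∀ q ≤ S.card, Antitone (f q) := by
  let x : ℕ → Fin r := fun p => if h : p < S.card then S.orderEmbOfFin rfl ⟨p, h⟩ else ⟨0, hr⟩
  let f : ℕ → GP r := fun q => μ + ∑ p ∈ Finset.range q, eV (x p)
  have hx1 : ∀ q q', q < q' → q' < S.card → x q < x q' := by
    intro q q' h h'
    simp only [x, dif_pos h', dif_pos (h.trans h')]
    exact (S.orderEmbOfFin rfl).strictMono h
  have hx2 : ∀ q < S.card, f (q + 1) = f q + eV (x q) := by
    intro q _
    simp only [f, Finset.sum_range_succ, add_assoc]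
  have hf0 : f 0 = μ := by simp [f]
  have hmem : ∀ i, (∃ p < S.card, x p = i) ↔ i ∈ S := by
    intro i
    have e : i ∈ Set.range (S.orderEmbOfFin rfl) ↔ i ∈ S := by
      rw [Finset.range_orderEmbOfFin]; simp
    rw [← e]
    constructor
    · rintro ⟨p, hp, rfl⟩
      exact ⟨⟨p, hp⟩, by simp only [x, dif_pos hp]⟩
    · rintro ⟨⟨p, hp⟩, rfl⟩
      exact ⟨p, hp, by simp only [x, dif_pos hp]⟩
  have hfd : f S.card = μ + indV S := by
    ext i
    rw [stdP_apply hx1 hx2 S.card le_rfl i, hf0]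
    simp only [hmem, Pi.add_apply, indV]
  refine ⟨f, ⟨x, hx1, hx2⟩, hf0, hfd, ?_⟩
  intro q hq i j hij
  have ei := stdP_apply hx1 hx2 q hq i
  have ej := stdP_apply hx1 hx2 q hq j
  rw [hf0] at ei ej
  have a1 := h1 hij
  have a2 := h2 hij
  simp only [Pi.add_apply, indV] at a2
  rw [ei, ej]
  by_cases hj : ∃ p < q, x p = j
  · obtain ⟨p, hp, hpj⟩ := hj
    have hjS : j ∈ S := (hmem j).1 ⟨p, by omega, hpj⟩
    rw [if_pos hjS] at a2
    rw [if_pos ⟨p, hp, hpj⟩]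
    by_cases hi : i ∈ S
    · obtain ⟨p', hp', hpi⟩ := (hmem i).2 hi
      have : p' < q := by
        by_contra hc
        have := hx1 p p' (by omega) hp'
        rw [hpi, hpj] at this
        exact absurd this (not_lt.mpr hij)
      rw [if_pos ⟨p', this, hpi⟩]; rw [if_pos hi] at a2; exact a2
    · rw [if_neg hi] at a2
      refine a2.trans ?_
      split_ifs <;> omega
  · rw [if_neg hj]
    split_ifs <;> omega

theorem colStep_std {r : ℕ} (hr : 0 < r) {c : ℤ} {μ lam : GP r} (h1 : Antitone μ)
    (h2 : Antitone lam) (h : colStep r c μ lam) :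
    ∃ f : ℕ → GP r, Std c.natAbs f ∧ f 0 = μ ∧ f c.natAbs = lam ∧
      ∀ q ≤ c.natAbs, Antitone (f q) := by
  obtain ⟨S, hS, hc⟩ := h
  rw [← hS]
  split_ifs at hc with h0
  · subst hc
    obtain ⟨f, a, b, d, e⟩ := colP hr S μ h1 h2
    exact ⟨f, Or.inl a, b, d, e⟩
  · have hm : lam + indV S = μ := by rw [hc]; abel
    obtain ⟨f, a, b, d, e⟩ := colP hr S lam h2 (by rw [hm]; exact h1)
    refine ⟨fun q => f (S.card - q), Std.trev (Or.inl a), ?_, ?_, ?_⟩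
    · simp [d, hm]
    · simp [b]
    · intro q hq; exact e _ (by omega)

theorem exists_blk {r : ℕ} (hr : 0 < r) (n : ℕ) (T : ℕ → GP r) (c : ℕ → ℤ) (d : ℕ → ℕ)
    (hd : ∀ j < n, d j = (c j).natAbs) (h : IsSkewFT r n T c) :
    ∃ f : ℕ → GP r, Blk n d f T ∧ ∀ k ≤ CC d n, Antitone (f k) := by
  induction n with
  | zero =>
    refine ⟨fun _ => T 0, ⟨fun j hj => absurd hj (by omega), fun j hj => ?_⟩, fun k _ => h.1 0 le_rfl⟩
    rw [show j = 0 by omega]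
  | succ n ih =>
    obtain ⟨f, hf, hfa⟩ := ih (fun j hj => hd j (by omega))
      ⟨fun k hk => h.1 k (by omega), fun j hj => h.2 j (by omega)⟩
    obtain ⟨b, b1, b2, b3, b4⟩ := colStep_std hr (h.1 n (by omega)) (h.1 (n + 1) le_rfl)
      (h.2 n (by omega))
    rw [← hd n (by omega)] at b1 b3 b4
    let g : ℕ → GP r := fun k => if k ≤ CC d n then f k else b (k - CC d n)
    have g1 : ∀ k ≤ CC d n, f k = g k := fun k hk => by simp only [g, if_pos hk]
    have g2 : ∀ q, b q = g (CC d n + q) := by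
      intro q
      by_cases hq : q = 0
      · subst hq
        rw [add_zero, ← g1 _ le_rfl, b2, hf.bp n le_rfl]
      · simp only [g]
        rw [if_neg (by omega), Nat.add_sub_cancel_left]
    have hg := hf.congr g1
    refine ⟨g, ⟨?_, ?_⟩, ?_⟩
    · intro j hj
      by_cases hjn : j < n
      · exact hg.std j hjn
      · obtain rfl : j = n := by omega
        exact b1.congr (fun q _ => g2 q)
    · intro j hj
      by_cases hjn : j ≤ n
      · exact hg.bp j hjn
      · obtain rfl : j = n + 1 := by omega
        rw [CC_succ, ← g2, b3]
    · intro k hk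
      rw [CC_succ] at hk
      by_cases hkn : k ≤ CC d n
      · rw [← g1 k hkn]; exact hfa k hkn
      · rw [show k = CC d n + (k - CC d n) by omega, ← g2]
        exact b4 _ (by omega)

theorem CC_find (d : ℕ → ℕ) (n k : ℕ) (hk : k < CC d n) :
    ∃ j < n, CC d j ≤ k ∧ k < CC d j + d j := by
  induction n with
  | zero => simp [CC] at hk
  | succ n ih =>
    rw [CC_succ] at hk
    by_cases h : k < CC d n
    · obtain ⟨j, h1, h2⟩ := ih h
      exact ⟨j, by omega, h2⟩
    · exact ⟨n, by omega, by omega, hk⟩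

theorem Std.step {r d : ℕ} {f : ℕ → GP r} (h : Std d f) (q : ℕ) (hq : q < d) :
    Step1 (f q) (f (q + 1)) := by
  rcases h with ⟨x, _, h⟩ | ⟨x, _, h⟩
  · exact ⟨x q, Or.inl (h q hq)⟩
  · have := Step1.revNeg ⟨x q, Or.inl (h q hq)⟩
    simpa only [revNeg_revNeg] using this

theorem Blk.ok {r n : ℕ} {d : ℕ → ℕ} {f T : ℕ → GP r} (h : Blk n d f T) (h0 : T 0 = 0)
    (ha : ∀ k ≤ CC d n, Antitone (f k)) : RowOK (CC d n) f where
  zero := by rw [← h0, h.bp 0 (by omega)]; simp [CC]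
  anti := ha
  step k hk := by
    obtain ⟨j, hj, h1, h2⟩ := CC_find d n k hk
    have := (h.std j hj).step (k - CC d j) (by omega)
    rw [show CC d j + (k - CC d j) = k by omega,
      show CC d j + (k - CC d j + 1) = k + 1 by omega] at this
    exact this

theorem RowOK.congr {r t : ℕ} {f g : ℕ → GP r} (h : RowOK t f) (hfg : ∀ k ≤ t, f k = g k) :
    RowOK t g where
  zero := by rw [← hfg 0 (by omega), h.zero]
  anti k hk := by rw [← hfg k hk]; exact h.anti k hk
  step k hk := by rw [← hfg k hk.le, ← hfg (k + 1) hk]; exact h.step k hk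

theorem exists_std {r : ℕ} (hr : 0 < r) (n t : ℕ) (T : ℕ → GP r) (c : ℕ → ℤ) (d : ℕ → ℕ)
    (hd : ∀ j < n, d j = (c j).natAbs) (h : IsFT r n T c)
    (ht : t = CC d n) : Blk n d (stdT n T) T ∧ RowOK t (stdT n T) := by
  subst ht
  obtain ⟨f, h1, h2⟩ := exists_blk hr n T c d hd h.1
  have e : ∀ k ≤ CC d n, f k = stdT n T k := fun k hk => (h1.stdT k hk).symm
  exact ⟨h1.congr e, (h1.ok h.2 h2).congr e⟩

/-- The initial corner of the growth diagram. -/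
theorem corner_row {r t d : ℕ} (hdt : d ≤ t) {S : ℕ → GP r} (h : RowOK t S)
    (hs : Std d S) (q : ℕ) (hq : q + 1 ≤ d) : row S q = S q := by
  have hs' : Std (d - 1) (fun q => S (q + 1)) := by
    rcases hs with ⟨x, h1, h2⟩ | ⟨x, h1, h2⟩
    · exact Or.inl ⟨fun q => x (q + 1), fun a b e1 e2 => h1 _ _ (by omega) (by omega),
        fun q hq => h2 (q + 1) (by omega)⟩
    · exact Or.inr ⟨fun q => x (q + 1), fun a b e1 e2 => h1 _ _ (by omega) (by omega),
        fun q hq => h2 (q + 1) (by omega)⟩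
  have := (hs'.lemR (g := row S) (by
    change Antitone (S 0)
    exact h.anti 0 (by omega)) (fun q hq => rfl)).2 q (by omega)
  rw [this]
  change sortDesc (S 0 + S (q + 1) - S 1) = S q
  rw [h.zero, zero_add, hs.corner h.zero q hq, sortDesc_self (h.anti q (by omega))]

theorem Std.le {r d d' : ℕ} {f : ℕ → GP r} (h : Std d f) (hd : d' ≤ d) : Std d' f := by
  rcases h with ⟨x, h1, h2⟩ | ⟨x, h1, h2⟩
  · exact Or.inl ⟨x, fun a b e1 e2 => h1 a b e1 (by omega), fun q hq => h2 q (by omega)⟩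
  · exact Or.inr ⟨x, fun a b e1 e2 => h1 a b e1 (by omega), fun q hq => h2 q (by omega)⟩

theorem corner_PE {r t d : ℕ} (ht : 1 ≤ t) (hdt : d ≤ t) {S : ℕ → GP r} (h : RowOK t S)
    (hs : Std d S) (k q : ℕ) (hq : q + k ≤ d) : PE t S k q = S q := by
  induction k generalizing q with
  | zero => rfl
  | succ k ih =>
    have hs' : Std (d - k) (PE t S k) :=
      (hs.le (d' := d - k) (by omega)).congr (fun q hq => (ih q (by omega)).symm)
    rw [PE_succ, promo_lt _ _ _ (by omega),
      corner_row (by omega) (PE_ok ht h k) hs' q (by omega), ih q (by omega)]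

/-- One promotion step is compatible with blocks. -/
theorem Blk.promo {r n t : ℕ} {d : ℕ → ℕ} {S T : ℕ → GP r} (h : Blk n d S T) (hn : 1 ≤ n)
    (ht : 1 ≤ t) (htd : t = CC d n) (hper : d n = d 0) (hS : RowOK t S) (m : ℤ)
    (hm : S t = cC r m) : Blk n (fun i => d (i + 1)) (PE t S (d 0)) (promo n T) := by
  have C1 : ∀ j, CC (fun i => d (i + 1)) j + d 0 = CC d (j + 1) := by
    intro j
    induction j with
    | zero => simp [CC]
    | succ j ih => rw [CC_succ, CC_succ d (j + 1), ← ih]; omega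
  have hC1 : CC d 1 = d 0 := by simp [CC]
  have hCt : ∀ j ≤ n, CC d j ≤ t := fun j hj => htd ▸ CC_mono d hj
  have hC0 : ∀ j, 1 ≤ j → d 0 ≤ CC d j := fun j hj => hC1 ▸ CC_mono d hj
  have hc0t : d 0 ≤ t := hC1 ▸ hCt 1 hn
  have hs0 : Std (d 0) S := by
    have := h.std 0 (by omega)
    simpa [CC] using this
  have hcorner := corner_PE ht hc0t hS hs0
  have hanti : ∀ u k, k ≤ t → Antitone (PE t S u k) := fun u k hk => (PE_ok ht hS u).anti k hk
  -- one block
  have block : ∀ j, 1 ≤ j → j < n → Std (d 0) (fun k => PE t S k (CC d j - k)) →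
      Std (d j) (fun q => PE t S (d 0) (CC d j + q - d 0)) ∧
      Std (d 0) (fun k => PE t S k (CC d (j + 1) - k)) ∧
      PE t S (d 0) (CC d (j + 1) - d 0) =
        sortDesc (PE t S (d 0) (CC d j - d 0) + S (CC d (j + 1)) - S (CC d j)) := by
    intro j h1 hj hcol
    have hb := hCt (j + 1) hj
    have hc := hC0 j h1
    rw [CC_succ] at hb
    have := gridL (c := d 0) (d := d j) (fun k q => PE t S k (CC d j + q - k)) (h.std j hj) hcol
      (fun q hq => hanti _ _ (by omega)) (hanti _ _ (by omega)) (by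
        intro k hk q hq
        beta_reduce
        have := PE_rule (t := t) S k (CC d j + q - k - 1) (by omega)
        rw [show CC d j + q - k - 1 + 1 = CC d j + (q + 1) - (k + 1) by omega,
          show CC d j + q - k - 1 + 2 = CC d j + (q + 1) - k by omega,
          show CC d j + q - k - 1 = CC d j + q - (k + 1) by omega] at this
        rw [this, show CC d j + (q + 1) - (k + 1) = CC d j + q - k by omega])
    rw [CC_succ]
    exact this
  have cols : ∀ j, 1 ≤ j → j ≤ n → Std (d 0) (fun k => PE t S k (CC d j - k)) := by
    intro j h1
    induction j, h1 using Nat.le_induction with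
    | base =>
      intro _
      refine hs0.trev.congr (fun q hq => ?_)
      rw [hC1, hcorner q _ (by omega)]
    | succ j h1 ih =>
      intro hj
      exact (block j h1 hj (ih (by omega))).2.1
  refine ⟨?_, ?_⟩
  · intro j hj
    by_cases hjn : j + 1 < n
    · refine (block (j + 1) (by omega) hjn (cols _ (by omega) (by omega))).1.congr (fun q hq => ?_)
      rw [← C1, show CC (fun i => d (i + 1)) j + d 0 + q - d 0 = CC (fun i => d (i + 1)) j + q by omega]
    · have hjn' : j + 1 = n := by omega
      have hCj : CC (fun i => d (i + 1)) j = t - d 0 := by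
        have := C1 j; rw [hjn', ← htd] at this; omega
      beta_reduce
      rw [hjn', hper]
      refine ((hs0.trev.revNeg).addc (cC r m)).congr (fun q hq => ?_)
      rw [hCj, ← hcorner q (d 0 - q) (by omega)]
      have := PE_H ht hS m hm q (d 0 - q) (by omega)
      rw [← this]; congr 1 <;> omega
  · intro j hj
    by_cases hjn : j < n
    · rw [promo_lt _ _ _ hjn]
      clear hj
      induction j with
      | zero =>
        change T 0 = _
        rw [h.bp 0 (by omega)]
        simp only [CC, Finset.range_zero, Finset.sum_empty]
        rw [hS.zero, (PE_ok ht hS _).zero]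
      | succ j ih =>
        change sortDesc (row T j + T (j + 2) - T (j + 1)) = _
        have := (block (j + 1) (by omega) hjn (cols _ (by omega) (by omega))).2.2
        rw [← C1 (j + 1), ← C1 j, Nat.add_sub_cancel, Nat.add_sub_cancel] at this
        rw [this, ih (by omega), h.bp (j + 1) (by omega), h.bp (j + 2) (by omega), C1, C1]
    · obtain rfl : j = n := by omega
      rw [promo_ge _ _ _ hn le_rfl, h.bp j le_rfl]
      have := C1 j
      rw [CC_succ, hper, ← htd] at this
      rw [show CC (fun i => d (i + 1)) j = t by omega, PE_last ht, htd]

theorem CC_shift (d : ℕ → ℕ) (j k : ℕ) : CC d j + CC (fun i => d (i + j)) k = CC d (j + k) := by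
  induction k with
  | zero => simp [CC]
  | succ k ih => rw [CC_succ, ← add_assoc, ih, ← add_assoc, CC_succ, add_comm k j]

theorem Blk.PE {r n t : ℕ} {d : ℕ → ℕ} {S T : ℕ → GP r} (h : Blk n d S T) (hn : 1 ≤ n)
    (ht : 1 ≤ t) (htd : t = CC d n) (hper : ∀ j, d (j + n) = d j) (hS : RowOK t S) (m : ℤ)
    (hm : S t = cC r m) (j : ℕ) :
    Blk n (fun i => d (i + j)) (PE t S (CC d j)) (PE n T j) := by
  have hsum : ∀ j, CC (fun i => d (i + j)) n = t := by
    intro j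
    have a := CC_shift d j n
    have b := CC_shift d n j
    have e : (fun i => d (i + n)) = d := funext hper
    rw [e, add_comm n j, ← htd] at b
    omega
  induction j with
  | zero => exact h
  | succ j ih =>
    have := ih.promo hn ht (hsum j).symm (by beta_reduce; rw [add_comm n j, zero_add, hper])
      (PE_ok ht hS _) m (by rw [PE_last ht, hm])
    rw [PE_add, ← PE_succ, zero_add, ← CC_succ] at this
    simpa only [add_assoc, add_comm 1 j] using this

theorem evacAux_gt {r : ℕ} (m : ℕ) (T : ℕ → GP r) (k : ℕ) (hk : m < k) : evacAux m T k = T k := by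
  induction m generalizing T with
  | zero => rfl
  | succ m ih =>
    change evacAux m (BKseg 1 (m + 1) T) k = T k
    rw [ih _ (by omega), bkseg_eq, if_neg (by omega)]

theorem evacAux_PE {r n : ℕ} (m : ℕ) (hm : m + 1 ≤ n) (T U : ℕ → GP r)
    (h : ∀ k ≤ m + 1, T k = U k) (k : ℕ) (hk : k ≤ m + 1) :
    evacAux m T k = PE n U (m + 1 - k) k := by
  induction m generalizing T U with
  | zero =>
    change T k = _
    rw [h k hk]
    obtain rfl | rfl : k = 0 ∨ k = 1 := by omega
    · change _ = PE n U 1 0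
      rw [PE_succ, promo_zero]; rfl
    · rfl
  | succ m ih =>
    change evacAux m (BKseg 1 (m + 1) T) k = _
    by_cases hk' : k ≤ m + 1
    · rw [ih (by omega) (BKseg 1 (m + 1) T) (promo n U) ?_ hk']
      · change PE n (PE n U 1) _ _ = _
        rw [PE_add]; congr 1; omega
      · intro j hj
        rw [bkseg_eq, if_pos hj, promo_lt _ _ _ (by omega)]
        exact row_congr T U (m + 2) h j (by omega)
    · rw [evacAux_gt _ _ _ (by omega), bkseg_eq, if_neg (by omega), h k hk,
        show m + 1 + 1 - k = 0 by omega]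
      rfl

theorem evac_PE {r n : ℕ} (hn : 1 ≤ n) (T : ℕ → GP r) (k : ℕ) (hk : k ≤ n) :
    evac n T k = PE n T (n - k) k := by
  unfold evac
  rw [evacAux_PE (n := n) (n - 1) (by omega) T T (fun _ _ => rfl) k (by omega)]
  congr 1; omega

/-- The dual path. -/
def dualS {r : ℕ} (t : ℕ) (m : ℤ) (S : ℕ → GP r) (k : ℕ) : GP r := cC r m + revNeg (S (t - k))

theorem CC_rev (d : ℕ → ℕ) (n j : ℕ) (hj : j ≤ n) :
    CC (fun j => d (n - 1 - j)) j + CC d (n - j) = CC d n := by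
  induction j with
  | zero => simp [CC]
  | succ j ih =>
    rw [CC_succ, ← ih (by omega), show n - j = n - (j + 1) + 1 by omega, CC_succ,
      show n - 1 - j = n - (j + 1) by omega]
    omega

theorem Blk.evac {r n t : ℕ} {d : ℕ → ℕ} {S T : ℕ → GP r} (h : Blk n d S T) (hn : 1 ≤ n)
    (ht : 1 ≤ t) (htd : t = CC d n) (hper : ∀ j, d (j + n) = d j) (hS : RowOK t S) (m : ℤ)
    (hm : S t = cC r m) :
    Blk n (fun j => d (n - 1 - j)) (dualS t m S) (evac n T) := by
  refine ⟨?_, ?_⟩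
  · intro j hj
    have e := CC_rev d n j hj.le
    refine (((h.std (n - 1 - j) (by omega)).trev.revNeg).addc (cC r m)).congr (fun q hq => ?_)
    have e2 : CC d (n - j) = CC d (n - 1 - j) + d (n - 1 - j) := by
      rw [← CC_succ]; congr 1; omega
    unfold dualS
    congr 3
    beta_reduce at hq
    omega
  · intro j hj
    have e := CC_rev d n j hj
    rw [evac_PE hn T j hj, (h.PE hn ht htd hper hS m hm (n - j)).bp j hj]
    have e2 := CC_shift d (n - j) j
    rw [show n - j + j = n by omega] at e2
    have e3 := PE_H ht hS m hm 0 (CC d (n - j)) (by omega)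
    rw [zero_add, PE_zero] at e3
    rw [show CC (fun i => d (i + (n - j))) j = t - CC d (n - j) by omega, e3]
    unfold dualS
    congr 3
    omega

theorem dualS_ok {r t : ℕ} {S : ℕ → GP r} (hS : RowOK t S) (m : ℤ) (hm : S t = cC r m) :
    RowOK t (dualS t m S) where
  zero := by
    unfold dualS
    rw [Nat.sub_zero, hm, revNeg_cC]; abel
  anti k hk := by
    unfold dualS
    intro i j hij
    have := revNeg_antitone (hS.anti (t - k) (by omega)) hij
    simp only [Pi.add_apply, cC]
    omega
  step k hk := by
    have := ((hS.step (t - (k + 1)) (by omega)).revNeg).symm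
    rw [show t - (k + 1) + 1 = t - k by omega] at this
    unfold dualS
    obtain ⟨x, hx | hx⟩ := this
    · exact ⟨x, Or.inl (by rw [hx]; abel)⟩
    · exact ⟨x, Or.inr (by rw [hx]; abel)⟩

theorem dualS_PE {r t : ℕ} (ht : 1 ≤ t) {S : ℕ → GP r} (hS : RowOK t S) (m : ℤ)
    (hm : S t = cC r m) (u : ℕ) (hu : u ≤ t) (k : ℕ) (hk : k ≤ t) :
    PE t (dualS t m S) u k = PE t S (2 * t - u - k) k := by
  have hD := dualS_ok hS m hm
  induction u generalizing k with
  | zero =>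
    rw [PE_zero, show 2 * t - 0 - k = 0 + (t - k) + t by omega, PE_per ht hS m hm _ _ hk]
    have := PE_H ht hS m hm 0 (t - k) (by omega)
    rw [show t - (t - k) = k by omega] at this
    rw [this]; rfl
  | succ u ih =>
    induction k with
    | zero => rw [(PE_ok ht hD _).zero, (PE_ok ht hS _).zero]
    | succ k ihk =>
      by_cases hkt : k + 1 = t
      · rw [hkt, PE_last ht, PE_last ht, hm]
        unfold dualS
        rw [Nat.sub_self, hS.zero, revNeg_zero, add_zero]
      · rw [PE_rule _ _ _ (by omega), ihk (by omega), ih (by omega) _ (by omega),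
          ih (by omega) _ (by omega)]
        obtain ⟨w, hw⟩ : ∃ w, w + u + k + 2 = 2 * t := ⟨2 * t - u - k - 2, by omega⟩
        rw [show 2 * t - (u + 1) - k = w + 1 by omega, show 2 * t - u - (k + 2) = w by omega,
          show 2 * t - u - (k + 1) = w + 1 by omega, show 2 * t - (u + 1) - (k + 1) = w by omega]
        exact (PE_rule' ht hS w k (by omega)).symm

theorem dualS_rec {r t : ℕ} (ht : 1 ≤ t) {S : ℕ → GP r} (hS : RowOK t S) (m : ℤ)
    (hm : S t = cC r m) (i u v : ℕ) (hi : i ≤ r) (hu : 1 ≤ u) (hut : u ≤ t) (huv : u < v)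
    (hvt : v < u + t) :
    recorded r t (dualS t m S) i u v ↔
      recorded r t S (r - i) (2 * t + 1 - u) (3 * t + 1 - v) := by
  have hD := dualS_ok hS m hm
  have e : recorded r t (dualS t m S) i u v ↔
      recorded r t S i (2 * t + 1 - v) (2 * t + 1 - u) := by
    obtain ⟨u, rfl⟩ : ∃ u', u = u' + 1 := ⟨u - 1, by omega⟩
    obtain ⟨k, rfl⟩ : ∃ k, v = u + k + 2 := ⟨v - u - 2, by omega⟩
    obtain ⟨w, hw⟩ : ∃ w, w + u + k + 2 = 2 * t := ⟨2 * t - u - k - 2, by omega⟩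
    rw [(QQ_spec ht hD i u k (by omega)).2.1,
      show 2 * t + 1 - (u + k + 2) = w + 1 by omega, show 2 * t + 1 - (u + 1) = w + k + 2 by omega,
      (QQ_spec ht hS i w k (by omega)).2.1]
    unfold QQ
    rw [dualS_PE ht hS m hm u (by omega) _ (by omega),
      dualS_PE ht hS m hm (u + 1) (by omega) _ (by omega),
      dualS_PE ht hS m hm u (by omega) _ (by omega),
      dualS_PE ht hS m hm (u + 1) (by omega) _ (by omega)]
    rw [show 2 * t - (u + 1) - k = w + 1 by omega, show 2 * t - u - (k + 2) = w by omega,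
          show 2 * t - u - (k + 1) = w + 1 by omega, show 2 * t - (u + 1) - (k + 1) = w by omega]
    constructor <;> intro h <;> linarith
  rw [e, rec_dual ht hS m hm i _ _ hi (by omega) (by omega) (by omega),
    show 2 * t + 1 - v + t = 3 * t + 1 - v by omega]

theorem recorded_congr {r t : ℕ} {S S' : ℕ → GP r} (h : ∀ k ≤ t, S k = S' k) (i u v : ℕ)
    (huv : u < v) (hvt : v < u + t) : recorded r t S i u v ↔ recorded r t S' i u v := by
  unfold recorded
  rw [PE_congr S S' t h (u - 1) (v - u) (by omega), PE_congr S S' t h u (v - u - 1) (by omega),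
    PE_congr S S' t h (u - 1) (v - u + 1) (by omega), PE_congr S S' t h u (v - u) (by omega)]

theorem recorded_shift {r t : ℕ} (S : ℕ → GP r) (w i u v : ℕ) (hu : 1 ≤ u) :
    recorded r t (PE t S w) i u v ↔ recorded r t S i (u + w) (v + w) := by
  unfold recorded
  simp only [PE_add]
  rw [show w + (u - 1) = u + w - 1 by omega, show v + w - (u + w) = v - u by omega, add_comm w u]

theorem rec_per_mul {r t : ℕ} (ht : 1 ≤ t) {S : ℕ → GP r} (h : RowOK t S) (m : ℤ)
    (hm : S t = cC r m) (i u v x : ℕ) (hu : 1 ≤ u) (huv : u < v) (hvt : v < u + t) :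
    recorded r t S i (u + x * t) (v + x * t) ↔ recorded r t S i u v := by
  induction x with
  | zero => simp
  | succ x ih =>
    rw [← ih, ← rec_per ht h m hm i (u + x * t) (v + x * t) (by omega) (by omega) (by omega),
      add_mul, one_mul, add_assoc, add_assoc]

theorem rec_norm {r t : ℕ} (ht : 1 ≤ t) {S : ℕ → GP r} (h : RowOK t S) (m : ℤ)
    (hm : S t = cC r m) (i a b u v : ℕ) (ha : 1 ≤ a) (hab : a < b) (hb : b < a + t)
    (hu : u = (a - 1) % t + 1) (hv : v = (b - 1) % t + 1) :
    recorded r t S i a b ↔ recorded r t S i u (if u < v then v else v + t) := by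
  have h1 := Nat.div_add_mod (a - 1) t
  have h2 := Nat.mod_lt (a - 1) ht
  rw [mul_comm] at h1
  generalize (a - 1) / t = x at h1
  obtain ⟨w, rfl⟩ : ∃ w, b = w + x * t := ⟨b - x * t, by omega⟩
  obtain rfl : a = u + x * t := by omega
  have e : (w + x * t - 1) % t = (w - 1) % t := by
    rw [show w + x * t - 1 = w - 1 + x * t by omega, Nat.add_mul_mod_self_right]
  rw [e] at hv
  rw [rec_per_mul ht h m hm i u w x (by omega) (by omega) (by omega)]
  have hw : (if u < v then v else v + t) = w := by
    by_cases hwt : w - 1 < t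
    · rw [Nat.mod_eq_of_lt hwt] at hv
      rw [if_pos (by omega)]; omega
    · rw [Nat.mod_eq_sub_mod (by omega), Nat.mod_eq_of_lt (by omega)] at hv
      rw [if_neg (by omega)]; omega
  rw [hw]

theorem mod_shift_inj {t c u v : ℕ} (hu1 : 1 ≤ u) (hu : u ≤ t) (hv1 : 1 ≤ v) (hv : v ≤ t)
    (h : (u - 1 + c) % t = (v - 1 + c) % t) : u = v := by
  have := Nat.ModEq.add_right_cancel' c h
  unfold Nat.ModEq at this
  rw [Nat.mod_eq_of_lt (by omega), Nat.mod_eq_of_lt (by omega)] at this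
  omega

theorem part_iii {r n t : ℕ} (ht : 1 ≤ t) {T T' : ℕ → GP r} (h : RowOK t (stdT n T)) (m : ℤ)
    (hm : stdT n T t = cC r m) (c : ℕ) (hc : ∀ k ≤ t, stdT n T' k = PE t (stdT n T) c k)
    (i u v : ℕ) (hu1 : 1 ≤ u) (hu : u ≤ t) (hv1 : 1 ≤ v) (hv : v ≤ t) :
    promRel r n t T' i u v ↔
      promRel r n t T i ((u - 1 + c) % t + 1) ((v - 1 + c) % t + 1) := by
  have hinj : (u - 1 + c) % t + 1 = (v - 1 + c) % t + 1 ↔ u = v := by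
    constructor
    · intro h; exact mod_shift_inj (c := c) hu1 hu hv1 hv (by omega)
    · rintro rfl; rfl
  have b1 := Nat.mod_lt (u - 1 + c) ht
  have b2 := Nat.mod_lt (v - 1 + c) ht
  unfold promRel
  split_ifs with hi
  · rw [hinj]; omega
  · unfold PMmem
    rw [Ne, Ne, hinj]
    by_cases huv : u = v
    · simp [huv]
    · have key : recorded r t (stdT n T') i u (if u < v then v else v + t) ↔
          recorded r t (stdT n T) i ((u - 1 + c) % t + 1)
            (if (u - 1 + c) % t + 1 < (v - 1 + c) % t + 1 then (v - 1 + c) % t + 1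
              else (v - 1 + c) % t + 1 + t) := by
        have f1 : u < (if u < v then v else v + t) := by split_ifs <;> omega
        have f2 : (if u < v then v else v + t) < u + t := by split_ifs <;> omega
        rw [recorded_congr hc i u _ f1 f2, recorded_shift _ _ _ _ _ hu1]
        apply rec_norm ht h m hm i _ _ _ _ (by omega) (by omega) (by omega)
        · rw [show u + c - 1 = u - 1 + c by omega]
        · split_ifs
          · rw [show v + c - 1 = v - 1 + c by omega]
          · rw [show v + t + c - 1 = v - 1 + c + t by omega, Nat.add_mod_right]
      rw [key]
      constructor
      · rintro ⟨_, _, _, _, a, b, c', d⟩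
        exact ⟨by omega, by omega, by omega, by omega, a, b, c', d⟩
      · rintro ⟨_, _, _, _, a, b, c', d⟩
        exact ⟨by omega, by omega, by omega, by omega, a, b, c', d⟩

theorem part_iv {r n t : ℕ} (ht : 1 ≤ t) {T T' : ℕ → GP r} (h : RowOK t (stdT n T)) (m : ℤ)
    (hm : stdT n T t = cC r m) (hc : ∀ k ≤ t, stdT n T' k = dualS t m (stdT n T) k)
    (i u v : ℕ) (hir : i ≤ r) (hu1 : 1 ≤ u) (hu : u ≤ t) (hv1 : 1 ≤ v) (hv : v ≤ t) :
    promRel r n t T' i u v ↔ promRel r n t T (r - i) (t + 1 - u) (t + 1 - v) := by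
  unfold promRel
  by_cases hi : i = 0 ∨ i = r
  · rw [if_pos hi, if_pos (by omega)]; omega
  · rw [if_neg hi, if_neg (by omega)]
    unfold PMmem
    by_cases huv : u = v
    · simp [huv]
    · have key : recorded r t (stdT n T') i u (if u < v then v else v + t) ↔
          recorded r t (stdT n T) (r - i) (t + 1 - u)
            (if t + 1 - u < t + 1 - v then t + 1 - v else t + 1 - v + t) := by
        have f1 : u < (if u < v then v else v + t) := by split_ifs <;> omega
        have f2 : (if u < v then v else v + t) < u + t := by split_ifs <;> omega
        rw [recorded_congr hc i u _ f1 f2, dualS_rec ht h m hm i u _ hir hu1 hu f1 f2]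
        apply rec_norm ht h m hm (r - i) _ _ _ _ (by omega) (by omega) (by omega)
        · rw [show 2 * t + 1 - u - 1 = t - u + t by omega, Nat.add_mod_right,
            Nat.mod_eq_of_lt (by omega)]
          omega
        · split_ifs
          · rw [show 3 * t + 1 - v - 1 = t - v + t + t by omega, Nat.add_mod_right,
              Nat.add_mod_right, Nat.mod_eq_of_lt (by omega)]
            omega
          · rw [show 3 * t + 1 - (v + t) - 1 = t - v + t by omega, Nat.add_mod_right,
              Nat.mod_eq_of_lt (by omega)]
            omega
      rw [key]
      constructor
      · rintro ⟨_, _, _, _, a, b, c', d⟩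
        exact ⟨by omega, by omega, by omega, by omega, by omega, by omega, by omega, d⟩
      · rintro ⟨_, _, _, _, a, b, c', d⟩
        exact ⟨by omega, by omega, by omega, by omega, by omega, by omega, by omega, d⟩

/-- **Theorem (promotion permutations of rectangular fluctuating tableaux).**
Let `T` be an `r`-row rectangular fluctuating tableau of type `(c_1,…,c_n)` with
`t = Σ_j |c_j| ≥ 1`.  Then for all `0 ≤ i ≤ r`:
(i) `prom_i(T)` is everywhere defined and is a permutation of `{1,…,t}` (its graph is
    the graph of a permutation);
(ii) `prom_i(T) = prom_{r-i}(T)⁻¹`;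
(iii) `prom_i(P(T)) = σ^{-|c_1|} ∘ prom_i(T) ∘ σ^{|c_1|}` where `σ` is the long cycle
      `σ(j) = j+1 (mod t)` on `{1,…,t}`;
(iv) `prom_i(E(T)) = w₀ ∘ prom_{r-i}(T) ∘ w₀` where `w₀(j) = t+1-j`. -/
theorem promotion_permutation_properties
    (r n t : ℕ) (T : ℕ → GP r) (c : ℕ → ℤ)
    (hT : IsFT r n T c) (hrect : Rect r n T)
    (ht : t = ∑ j ∈ Finset.range n, (c j).natAbs) (ht1 : 1 ≤ t) :
    ∀ i ≤ r,
      (∃ π : Equiv.Perm (Fin t), ∀ u v : Fin t,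
          promRel r n t T i ((u : ℕ) + 1) ((v : ℕ) + 1) ↔ π u = v) ∧
      (∀ u v, 1 ≤ u → u ≤ t → 1 ≤ v → v ≤ t →
          (promRel r n t T i u v ↔ promRel r n t T (r - i) v u)) ∧
      (∀ u v, 1 ≤ u → u ≤ t → 1 ≤ v → v ≤ t →
          (promRel r n t (promo n T) i u v ↔
            promRel r n t T i ((u - 1 + (c 0).natAbs) % t + 1)
              ((v - 1 + (c 0).natAbs) % t + 1))) ∧
      (∀ u v, 1 ≤ u → u ≤ t → 1 ≤ v → v ≤ t →
          (promRel r n t (evac n T) i u v ↔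
            promRel r n t T (r - i) (t + 1 - u) (t + 1 - v))) := by


  have hn : 1 ≤ n := by
    rcases Nat.eq_zero_or_pos n with h | h
    · subst h; simp at ht; omega
    · exact h
  have hr : 0 < r := by
    rcases Nat.eq_zero_or_pos r with h | h
    · exfalso
      have : ∑ j ∈ Finset.range n, (c j).natAbs = 0 := by
        apply Finset.sum_eq_zero
        intro j hj
        obtain ⟨S, hS, _⟩ := hT.1.2 j (Finset.mem_range.mp hj)
        have := Finset.card_le_univ S
        rw [Fintype.card_fin] at this
        omega
      omega
    · exact h
  let d : ℕ → ℕ := fun j => (c (j % n)).natAbs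
  have hd : ∀ j < n, d j = (c j).natAbs := fun j hj => by simp only [d, Nat.mod_eq_of_lt hj]
  have hper : ∀ j, d (j + n) = d j := fun j => by simp only [d, Nat.add_mod_right]
  have htd : t = CC d n := by
    rw [ht]; unfold CC
    exact Finset.sum_congr rfl (fun j hj => (hd j (Finset.mem_range.mp hj)).symm)
  have hd0 : d 0 = (c 0).natAbs := hd 0 hn
  obtain ⟨hB, hS⟩ := exists_std hr n t T c d hd hT htd
  obtain ⟨m, hm'⟩ := hrect
  have hm : stdT n T t = cC r m := by
    rw [htd, ← hB.bp n le_rfl]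
    ext i; rw [hm' i]; rfl
  have hP := hB.promo hn ht1 htd (by have := hper 0; rwa [zero_add] at this) hS m hm
  have hE := hB.evac hn ht1 htd hper hS m hm
  have hPs : CC (fun i => d (i + 1)) n = t := by
    have a := CC_shift d 1 n
    have b := CC_shift d n 1
    have e : (fun i => d (i + n)) = d := funext hper
    rw [e, add_comm n 1, ← htd] at b
    omega
  have hEs : CC (fun j => d (n - 1 - j)) n = t := by
    have := CC_rev d n n le_rfl
    rw [Nat.sub_self, ← htd] at this
    simpa [CC] using this
  intro i hi
  refine ⟨prom_perm ht1 hS m hm i hi, fun u v h1 h2 h3 h4 => ?_, fun u v h1 h2 h3 h4 => ?_,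
    fun u v h1 h2 h3 h4 => ?_⟩
  · exact prom_dual ht1 hS m hm i hi u v
  · exact part_iii ht1 hS m hm _ (fun k hk => by
      rw [← hd0]; exact hP.stdT k (by rw [hPs]; exact hk)) i u v h1 h2 h3 h4
  · exact part_iv ht1 hS m hm (fun k hk => hE.stdT k (by rw [hEs]; exact hk)) i u v hi h1 h2 h3 h4

end FT
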